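/- Let Σ be a subshift of quasi-finite type. The Artin–Mazur zeta function ζ(z) = exp( Σ_{n≥1} (zⁿ/n) · #{x ∈ Σ : σⁿx = x} ) defines a holomorphic function on the disk |z| < e^{−h_top(Σ)} and extends to a meromorphic function on the disk |z| < e^{−h_{𝒮𝒞}(Σ)}. -/

import Mathlib

open Filter Set MeasureTheory

namespace QFTPaper

variable {A : Type*} {B : Type*}

/-- The left shift on bi-infinite sequences over the alphabet `A`. -/
def shift (x : ℤ → A) : ℤ → A := fun n => x (n + 1)

/-- A subshift: a closed, shift-invariant subset of `A^ℤ`. -/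
def IsSubshift [TopologicalSpace A] (X : Set (ℤ → A)) : Prop :=
  IsClosed X ∧ shift '' X = X

/-- The finite word `w` occurs in `x` at position `k`. -/
def OccursAt (w : List A) (x : ℤ → A) (k : ℤ) : Prop :=
  ∀ i : Fin w.length, x (k + (i : ℕ)) = w.get i

/-- The language of `X`: words of length `n` occurring in elements of `X`
(at position `0`, which is no restriction by shift-invariance). -/
def Lang (X : Set (ℤ → A)) (n : ℕ) : Set (List A) :=
  { w | w.length = n ∧ ∃ x ∈ X, OccursAt w x 0 }

/-- Topological entropy of a subshift. -/
noncomputable def hTop (X : Set (ℤ → A)) : ℝ :=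
  limsup (fun n : ℕ => Real.log (Nat.card ↥(Lang X n)) / (n : ℝ)) atTop

/-- Follower set of the finite word `w = A₋ₙ…A₀` (listed from `A₋ₙ` to `A₀`):
the set of one-sided sequences `B₀B₁B₂…` with `B ∈ X` and `B₋ₙ…B₀ = A₋ₙ…A₀`,
realized by requiring `w` to occur in `B` at positions `0,…,n` and reading off
the tail of `B` starting at the position of the last letter of `w`.
For the empty word this gives `X₊` (by shift-invariance). -/
def fol (X : Set (ℤ → A)) (w : List A) : Set (ℕ → A) :=
  { y | ∃ B ∈ X, (∀ i : Fin w.length, B ((i : ℕ) : ℤ) = w.get i) ∧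
        ∀ k : ℕ, y k = B ((w.length : ℤ) - 1 + (k : ℤ)) }

/-- `w = A₋ₙ…A₀` is a left constraint:
`∅ ≠ fol(A₋ₙ…A₀) ⊊ fol(A₋ₙ₊₁…A₀)`. -/
def IsLeftConstraint (X : Set (ℤ → A)) (w : List A) : Prop :=
  w ≠ [] ∧ fol X w ≠ ∅ ∧ fol X w ⊂ fol X w.tail

/-- `𝒞(X, n)`: the set of left constraints of length `n`. -/
def LC (X : Set (ℤ → A)) (n : ℕ) : Set (List A) :=
  { w | w.length = n ∧ IsLeftConstraint X w }

/-- The left constraint entropy `h_𝒞(X) = limsup (1/n) log⁺ #𝒞(X,n)`. -/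
noncomputable def hC (X : Set (ℤ → A)) : ℝ :=
  limsup (fun n : ℕ => max 0 (Real.log (Nat.card ↥(LC X n))) / (n : ℝ)) atTop

/-- The time-reversed subshift `X̄`. -/
def rev (X : Set (ℤ → A)) : Set (ℤ → A) :=
  (fun x : ℤ → A => fun n : ℤ => x (-n)) '' X

/-- The symmetric constraint entropy `h_𝒮𝒞(X) = min (h_𝒞(X), h_𝒞(X̄))`. -/
noncomputable def hSC (X : Set (ℤ → A)) : ℝ := min (hC X) (hC (rev X))

/-- Subshift of quasi-finite type: `h_𝒮𝒞(X) < h_top(X)`. -/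
def IsQFT [TopologicalSpace A] (X : Set (ℤ → A)) : Prop :=
  IsSubshift X ∧ hSC X < hTop X

/-- The word `B₋ₘ…B₀` read off from a one-sided past `b` (where `b j = B₋ⱼ`). -/
def wordOf (b : ℕ → A) (m : ℕ) : List A :=
  (List.range (m + 1)).map fun j => b (m - j)

/-- An extendable left constraint: a left constraint `A₋ₙ…A₀` which admits a
one-sided past `B` extending it such that `B₋ₘ…B₀` is again a left constraint
for infinitely many `m`. -/
def IsExtendable (X : Set (ℤ → A)) (w : List A) : Prop :=
  IsLeftConstraint X w ∧
  ∃ b : ℕ → A, wordOf b (w.length - 1) = w ∧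
    ∀ N : ℕ, ∃ m, N ≤ m ∧ IsLeftConstraint X (wordOf b m)

/-- `𝒞*(X, n)`: the set of extendable left constraints of length `n`. -/
def ELC (X : Set (ℤ → A)) (n : ℕ) : Set (List A) :=
  { w | w.length = n ∧ IsExtendable X w }

/-- The extendable left constraint entropy `h*_𝒞(X)`. -/
noncomputable def hCstar (X : Set (ℤ → A)) : ℝ :=
  limsup (fun n : ℕ => Real.log (Nat.card ↥(ELC X n)) / (n : ℝ)) atTop

/-- `h*_𝒮𝒞(X) = min (h*_𝒞(X), h*_𝒞(X̄))`. -/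
noncomputable def hSCstar (X : Set (ℤ → A)) : ℝ := min (hCstar X) (hCstar (rev X))

/-- Subshift of weak quasi-finite type: `h*_𝒮𝒞(X) < h_top(X)`. -/
def IsWeakQFT [TopologicalSpace A] (X : Set (ℤ → A)) : Prop :=
  IsSubshift X ∧ hSCstar X < hTop X

/-- Subshift of finite type: defined by excluding a finite set of finite words. -/
def IsSFT (X : Set (ℤ → A)) : Prop :=
  ∃ F : Finset (List A), X = { x | ∀ w ∈ F, ∀ k : ℤ, ¬ OccursAt w x k }

/-- Sofic subshift: the image of an SFT under a continuous shift-commuting map. -/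
def IsSofic [TopologicalSpace A] (X : Set (ℤ → A)) : Prop :=
  ∃ (B : Type) (_ : Fintype B) (Y : Set (ℤ → B)) (π : (ℤ → B) → (ℤ → A)),
    IsSFT Y ∧
    (letI : TopologicalSpace B := ⊥
     Continuous π) ∧
    (∀ x : ℤ → B, π (shift x) = shift (π x)) ∧ π '' Y = X


/-- Topological conjugacy of subshifts: a homeomorphism commuting with the shifts. -/
def Conjugate [TopologicalSpace A] [TopologicalSpace B]
    (X : Set (ℤ → A)) (Y : Set (ℤ → B)) : Prop :=
  ∃ φ : X ≃ₜ Y, ∀ x x' : X, (x' : ℤ → A) = shift (x : ℤ → A) →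
    (φ x' : ℤ → B) = shift (φ x : ℤ → B)

/-- The cylinder of a word of length `n` placed at positions `0,…,n-1`. -/
def cylSet (n : ℕ) (w : Fin n → A) : Set (ℤ → A) :=
  { x | ∀ i : Fin n, x ((i : ℕ) : ℤ) = w i }

/-- Entropy of the partition of `A^ℤ` into cylinders of length `n`. -/
noncomputable def blockEntropy [Fintype A] [MeasurableSpace A]
    (μ : Measure (ℤ → A)) (n : ℕ) : ℝ :=
  ∑ w : Fin n → A, Real.negMulLog ((μ (cylSet n w)).toReal)

/-- Kolmogorov–Sinai entropy of a shift-invariant measure on `A^ℤ`,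
computed with the natural (generating) partition into cylinders. -/
noncomputable def KSEntropy [Fintype A] [MeasurableSpace A]
    (μ : Measure (ℤ → A)) : ℝ :=
  ⨅ n : ℕ, blockEntropy μ (n + 1) / (n + 1)

/-- A maximum measure: an ergodic shift-invariant Borel probability measure
carried by `X` whose Kolmogorov–Sinai entropy equals the topological entropy of `X`. -/
def IsMaxMeasure [Fintype A] [MeasurableSpace A]
    (X : Set (ℤ → A)) (μ : Measure (ℤ → A)) : Prop :=
  IsProbabilityMeasure μ ∧ μ Xᶜ = 0 ∧ Ergodic shift μ ∧ KSEntropy μ = hTop X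

/-- The number of points of `X` fixed by the `n`-th power of the shift. -/
noncomputable def perCount (X : Set (ℤ → A)) (n : ℕ) : ℕ :=
  Nat.card {x : ℤ → A | x ∈ X ∧ shift^[n] x = x}


section Analysis
open Topology

lemma powser_summable (a : ℕ → ℂ) (C ρ : ℝ) (k : ℕ) (hρ : 0 < ρ) (ha : ∀ n, ‖a n‖ ≤ C * ρ ^ n)
    (z : ℂ) (hz : ‖z‖ * ρ < 1) : Summable fun n => a n * z ^ (n + k) := by
  have h0 : 0 ≤ ‖z‖ * ρ := by positivity
  refine Summable.of_norm_bounded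
    ((summable_geometric_of_lt_one h0 hz).mul_left (C * ‖z‖ ^ k)) fun n => ?_
  rw [norm_mul, norm_pow]
  calc ‖a n‖ * ‖z‖ ^ (n + k) ≤ C * ρ ^ n * ‖z‖ ^ (n + k) := by gcongr; exact ha n
    _ = C * ‖z‖ ^ k * (‖z‖ * ρ) ^ n := by rw [mul_pow, pow_add]; ring

lemma powser_diff (a : ℕ → ℂ) (C ρ : ℝ) (k : ℕ) (hρ : 0 < ρ) (ha : ∀ n, ‖a n‖ ≤ C * ρ ^ n) :
    DifferentiableOn ℂ (fun z : ℂ => ∑' n, a n * z ^ (n + k)) (Metric.ball 0 (1 / ρ)) := by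
  intro z hz
  have hz' : ‖z‖ < 1 / ρ := by simpa using hz
  obtain ⟨r, hr1, hr2⟩ := exists_between hz'
  have hr0 : 0 < r := lt_of_le_of_lt (norm_nonneg _) hr1
  have hC : 0 ≤ C := by
    have := (norm_nonneg _).trans (ha 0); simpa using this
  have hrr : r * ρ < 1 := by rwa [lt_div_iff₀ hρ] at hr2
  have key : DifferentiableOn ℂ (fun z : ℂ => ∑' n, a n * z ^ (n + k)) (Metric.ball 0 r) := by
    refine Complex.differentiableOn_tsum_of_summable_norm
      (u := fun n => (C * r ^ k) * (r * ρ) ^ n)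
      ((summable_geometric_of_lt_one (by positivity) hrr).mul_left _) ?_ Metric.isOpen_ball ?_
    · intro n; fun_prop
    · intro n w hw
      have hw' : ‖w‖ ≤ r := by
        have : ‖w‖ < r := by simpa using hw
        exact this.le
      rw [norm_mul, norm_pow]
      calc ‖a n‖ * ‖w‖ ^ (n + k) ≤ C * ρ ^ n * r ^ (n + k) := by gcongr; exact ha n
        _ = C * r ^ k * (r * ρ) ^ n := by rw [mul_pow, pow_add]; ring
  exact (key.differentiableAt (Metric.isOpen_ball.mem_nhds (by simpa using hr1))).differentiableWithinAt

attribute [local instance] Matrix.linftyOpNormedRing Matrix.linftyOpNormedAddCommGroup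
  Matrix.linftyOpNormedSpace Matrix.linftyOpNormedAlgebra

lemma opnorm_le {ι : Type*} [Fintype ι] [DecidableEq ι] (M : Matrix ι ι ℂ) (q : ℝ) (hq : 0 ≤ q)
    (hM : ∀ i, ∑ j, ‖M i j‖ ≤ q) : ‖M‖ ≤ q := by
  rw [Matrix.linfty_opNorm_def]
  have : ((Finset.univ : Finset ι).sup fun i => ∑ j, ‖M i j‖₊) ≤ q.toNNReal := by
    refine Finset.sup_le fun i _ => ?_
    rw [← NNReal.coe_le_coe]
    simpa [Real.coe_toNNReal q hq] using hM i
  calc _ ≤ ((q.toNNReal : NNReal) : ℝ) := by exact_mod_cast this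
    _ = q := Real.coe_toNNReal q hq

lemma entry_le {ι : Type*} [Fintype ι] [DecidableEq ι] (M : Matrix ι ι ℂ) (i j : ι) :
    ‖M i j‖ ≤ ‖M‖ := by
  rw [Matrix.linfty_opNorm_def]
  have h1 : ‖M i j‖₊ ≤ ∑ j, ‖M i j‖₊ :=
    Finset.single_le_sum (f := fun j => ‖M i j‖₊) (fun _ _ => zero_le) (Finset.mem_univ j)
  have h2 : ∑ j, ‖M i j‖₊ ≤ (Finset.univ : Finset ι).sup fun i => ∑ j, ‖M i j‖₊ :=
    Finset.le_sup (f := fun i => ∑ j, ‖M i j‖₊) (Finset.mem_univ i)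
  exact_mod_cast h1.trans h2

lemma entry_pow_le {ι : Type*} [Fintype ι] [DecidableEq ι] (M : Matrix ι ι ℂ) (q : ℝ) (hq : 0 ≤ q)
    (hM : ‖M‖ ≤ q) (i j : ι) (n : ℕ) :
    ‖(M ^ n) i j‖ ≤ q ^ n := by
  rcases n with _ | n
  · simp only [pow_zero, Matrix.one_apply]; split_ifs <;> simp
  · refine (entry_le _ i j).trans ((norm_pow_le' M (Nat.succ_pos n)).trans ?_)
    gcongr

lemma trace_pow_le {ι : Type*} [Fintype ι] [DecidableEq ι] (M : Matrix ι ι ℂ) (q : ℝ) (hq : 0 ≤ q)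
    (hM : ‖M‖ ≤ q) (n : ℕ) :
    ‖(M ^ n).trace‖ ≤ Fintype.card ι * q ^ n := by
  unfold Matrix.trace
  refine (norm_sum_le _ _).trans ?_
  refine (Finset.sum_le_sum fun i _ => entry_pow_le M q hq hM i i n).trans ?_
  simp

lemma geom_trace {ι : Type*} [Fintype ι] [DecidableEq ι] (M : Matrix ι ι ℂ) (z : ℂ)
    (hz : ‖z • M‖ < 1) :
    ∑' n : ℕ, (M ^ (n + 1)).trace * z ^ n = ((∑' n : ℕ, (z • M) ^ n) * M).trace := by
  have hs := (summable_geometric_of_norm_lt_one hz).hasSum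
  let L : Matrix ι ι ℂ →ₗ[ℂ] ℂ := (Matrix.traceLinearMap ι ℂ ℂ) ∘ₗ (LinearMap.mulRight ℂ M)
  have := hs.map L (LinearMap.continuous_of_finiteDimensional L)
  refine Eq.trans ?_ this.tsum_eq
  refine tsum_congr fun n => ?_
  simp [L, smul_pow, pow_succ, mul_comm]

lemma det_deriv {ι : Type*} [Fintype ι] [DecidableEq ι] (M : Matrix ι ι ℂ) (z : ℂ)
    (hz : ‖z • M‖ < 1) :
    HasDerivAt (fun w : ℂ => (1 - w • M).det)
      (-(1 - z • M).det * ∑' n : ℕ, (M ^ (n + 1)).trace * z ^ n) z := by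
  rw [geom_trace M z hz]
  set G := ∑' n : ℕ, (z • M) ^ n with hG
  have h1 : (1 - z • M) * G = 1 := mul_neg_geom_series _ hz
  have hp := fun w : ℂ => Matrix.det_one_add_smul (w - z) (-(G * M))
  have heq : (fun w : ℂ => (1 - w • M).det) = fun w =>
      (1 - z • M).det * (1 + (w - z) • (-(G * M))).det := by
    funext w
    rw [← Matrix.det_mul, mul_add, mul_one, Matrix.mul_smul, Matrix.mul_neg, ← Matrix.mul_assoc, h1,
      Matrix.one_mul]
    congr 1
    rw [smul_neg, sub_smul]; abel
  rw [heq]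
  simp_rw [hp]
  have hd : HasDerivAt (fun w : ℂ => 1 + (-(G * M)).trace * (w - z) +
      Polynomial.eval (w - z) (Matrix.det (1 + (Polynomial.X : Polynomial ℂ) •
        (-(G * M)).map Polynomial.C)).divX.divX * (w - z) ^ 2)
      ((-(G * M)).trace) z := by
    have hw : HasDerivAt (fun w : ℂ => w - z) 1 z := (hasDerivAt_id z).sub_const z
    have hpoly := HasDerivAt.comp (h := fun w : ℂ => w - z) z
      ((Matrix.det (1 + (Polynomial.X : Polynomial ℂ) •
        (-(G * M)).map Polynomial.C)).divX.divX.hasDerivAt (z - z)) hw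
    have := ((hw.const_mul (-(G * M)).trace).const_add 1).add (hpoly.mul (hw.pow 2))
    exact this.congr_deriv (by simp)
  have := hd.const_mul ((1 - z • M).det)
  exact this.congr_deriv (by rw [Matrix.trace_neg]; ring)

lemma trlog {ι : Type*} [Fintype ι] [DecidableEq ι] (M : Matrix ι ι ℂ) (q : ℝ) (hq : 0 < q)
    (hM : ‖M‖ ≤ q) (z : ℂ) (hz : ‖z‖ * q < 1) :
    Complex.exp (∑' n : ℕ, (M ^ (n + 1)).trace / (n + 1) * z ^ (n + 1)) * (1 - z • M).det = 1 := by
  obtain ⟨r, hr1, hr2⟩ := exists_between (show ‖z‖ < 1 / q by rwa [lt_div_iff₀ hq])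
  have hr0 : 0 < r := lt_of_le_of_lt (norm_nonneg _) hr1
  have hrq : r * q < 1 := by rwa [lt_div_iff₀ hq] at hr2
  have hsm : ∀ w ∈ Metric.ball (0 : ℂ) r, ‖w • M‖ < 1 := by
    intro w hw
    have hw' : ‖w‖ < r := by simpa using hw
    rw [norm_smul]
    calc ‖w‖ * ‖M‖ ≤ r * q := by gcongr
      _ < 1 := hrq
  let E : ℂ → ℂ := fun w => ∑' n : ℕ, (M ^ (n + 1)).trace / (n + 1) * w ^ (n + 1)
  have hE : ∀ w ∈ Metric.ball (0 : ℂ) r,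
      HasDerivAt E (∑' n : ℕ, (M ^ (n + 1)).trace * w ^ n) w := by
    intro w hw
    refine hasDerivAt_tsum_of_isPreconnected
      (u := fun n : ℕ => (Fintype.card ι * q) * (r * q) ^ n)
      (g := fun (n : ℕ) w => (M ^ (n + 1)).trace / (n + 1) * w ^ (n + 1))
      (g' := fun (n : ℕ) w => (M ^ (n + 1)).trace * w ^ n)
      ((summable_geometric_of_lt_one (by positivity) hrq).mul_left _)
      Metric.isOpen_ball (convex_ball 0 r).isPreconnected ?_ ?_
      (Metric.mem_ball_self hr0) ?_ hw
    · intro n y _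
      have := ((hasDerivAt_pow (n + 1) y).const_mul ((M ^ (n + 1)).trace / ((n : ℂ) + 1)))
      refine this.congr_deriv ?_
      have : (n : ℂ) + 1 ≠ 0 := by exact_mod_cast Nat.succ_ne_zero n
      push_cast
      field_simp
    · intro n y hy
      have hy' : ‖y‖ < r := by simpa using hy
      rw [norm_mul, norm_pow]
      calc _ ≤ (Fintype.card ι * q ^ (n + 1)) * r ^ n := by
            gcongr
            exact trace_pow_le M q hq.le hM _
        _ = _ := by rw [mul_pow]; ring
    · simp only [pow_succ, mul_zero]; exact summable_zero
  let F : ℂ → ℂ := fun w => Complex.exp (E w) * (1 - w • M).det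
  have hF : ∀ w ∈ Metric.ball (0 : ℂ) r, HasDerivAt F 0 w := by
    intro w hw
    have := (hE w hw).cexp.mul (det_deriv M w (hsm w hw))
    exact this.congr_deriv (by ring)
  have hconst := (convex_ball (0 : ℂ) r).is_const_of_fderivWithin_eq_zero (𝕜 := ℂ) (f := F)
    (fun w hw => (hF w hw).differentiableAt.differentiableWithinAt)
    (fun w hw => by
      rw [fderivWithin_of_isOpen Metric.isOpen_ball hw]
      have := (hF w hw).hasFDerivAt.fderiv
      rw [this]; ext; simp)
    (x := z) (y := 0) (by simpa using hr1) (Metric.mem_ball_self hr0)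
  have h0 : F 0 = 1 := by simp [F, E]
  rw [h0] at hconst
  exact hconst

lemma sumM {κ : Type*} [Fintype κ] [DecidableEq κ] (M : Matrix κ κ ℂ) (q : ℝ) (hq : 0 < q)
    (hM : ‖M‖ ≤ q) (z : ℂ) (hz : ‖z‖ * q < 1) :
    Summable fun n : ℕ => (M ^ (n + 1)).trace / (n + 1) * z ^ (n + 1) := by
  refine powser_summable _ (Fintype.card κ * q) q 1 hq ?_ z hz
  intro n
  rw [norm_div]
  have h1 : (1 : ℝ) ≤ ‖(n : ℂ) + 1‖ := by
    rw [show (n : ℂ) + 1 = ((n + 1 : ℕ) : ℂ) by push_cast; rfl, Complex.norm_natCast]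
    exact_mod_cast Nat.succ_pos n
  calc _ ≤ ‖(M ^ (n + 1)).trace‖ := div_le_self (norm_nonneg _) h1
    _ ≤ _ := (trace_pow_le M q hq.le hM _).trans (le_of_eq (by ring))

lemma schur_zeta {ι κ : Type*} [Fintype ι] [DecidableEq ι] [Fintype κ] [DecidableEq κ]
    (A : Matrix ι ι ℂ) (B : Matrix ι κ ℂ) (C : Matrix κ ι ℂ) (D : Matrix κ κ ℂ)
    (q : ℝ) (hq : 0 < q)
    (hM : ∀ i, ∑ j, ‖(Matrix.fromBlocks A B C D) i j‖ ≤ q) (hD : ∀ i, ∑ j, ‖D i j‖ ≤ q)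
    (z : ℂ) (hz : ‖z‖ * q < 1) :
    Complex.exp (∑' n : ℕ, (((Matrix.fromBlocks A B C D) ^ (n + 1)).trace - (D ^ (n + 1)).trace) /
      (n + 1) * z ^ (n + 1)) *
      (1 - Matrix.of fun i j => z * A i j + ∑' m : ℕ, (B * D ^ m * C) i j * z ^ (m + 2)).det = 1 := by
  set M := Matrix.fromBlocks A B C D with hMdef
  have nM := opnorm_le M q hq.le hM
  have nD := opnorm_le D q hq.le hD
  have tM := trlog M q hq nM z hz
  have tD := trlog D q hq nD z hz
  have hzD : ‖z • D‖ < 1 := by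
    rw [norm_smul]
    calc ‖z‖ * ‖D‖ ≤ ‖z‖ * q := by gcongr
      _ < 1 := hz
  have hsub : (∑' n : ℕ, ((M ^ (n + 1)).trace - (D ^ (n + 1)).trace) / (n + 1) * z ^ (n + 1))
      = (∑' n : ℕ, (M ^ (n + 1)).trace / (n + 1) * z ^ (n + 1)) -
        ∑' n : ℕ, (D ^ (n + 1)).trace / (n + 1) * z ^ (n + 1) := by
    rw [← (sumM M q hq nM z hz).tsum_sub (sumM D q hq nD z hz)]
    exact tsum_congr fun n => by ring
  set G := ∑' n : ℕ, (z • D) ^ n with hG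
  have h1 : (1 - z • D) * G = 1 := mul_neg_geom_series _ hzD
  have h2 : G * (1 - z • D) = 1 := geom_series_mul_neg _ hzD
  let _ : Invertible (1 - z • D) := ⟨G, h2, h1⟩
  have hinv : ⅟(1 - z • D) = G := rfl
  have hblock : 1 - z • M = Matrix.fromBlocks (1 - z • A) (-(z • B)) (-(z • C)) (1 - z • D) := by
    rw [hMdef, Matrix.fromBlocks_smul, ← Matrix.fromBlocks_one, sub_eq_add_neg,
      Matrix.fromBlocks_neg, Matrix.fromBlocks_add]
    simp [sub_eq_add_neg]
  have hS : (1 - z • A) - (-(z • B)) * ⅟(1 - z • D) * (-(z • C)) =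
      1 - Matrix.of fun i j => z * A i j + ∑' m : ℕ, (B * D ^ m * C) i j * z ^ (m + 2) := by
    rw [hinv]
    ext i j
    have hs := (summable_geometric_of_norm_lt_one hzD).hasSum
    let L : Matrix κ κ ℂ →ₗ[ℂ] ℂ :=
      { toFun := fun Y => (B * Y * C) i j
        map_add' := by intro x y; simp [Matrix.mul_add, Matrix.add_mul]
        map_smul' := by intro x y; simp }
    have hL := hs.map L (LinearMap.continuous_of_finiteDimensional L)
    have hL2 : ∑' m : ℕ, (B * D ^ m * C) i j * z ^ (m + 2) = z ^ 2 * (B * G * C) i j := by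
      have hL3 : (B * G * C) i j = ∑' n : ℕ, L ((z • D) ^ n) := hL.tsum_eq.symm
      rw [hL3, ← tsum_mul_left]
      refine tsum_congr fun m => ?_
      simp [L, smul_pow, pow_add]; ring
    simp only [Matrix.sub_apply, Matrix.of_apply, hL2]
    simp
    ring
  rw [hblock, Matrix.det_fromBlocks₂₂, hS] at tM
  rw [hsub, Complex.exp_sub]
  have hdD : (1 - z • D).det ≠ 0 := fun h => by simp [h] at tD
  have e1 := Complex.exp_ne_zero (∑' n : ℕ, (D ^ (n + 1)).trace / (n + 1) * z ^ (n + 1))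
  rw [div_mul_eq_mul_div, div_eq_one_iff_eq e1]
  apply mul_right_cancel₀ hdD
  linear_combination tM - tD
end Analysis
section Merom
open Topology

lemma nf_eqOn {g₁ g₂ : ℂ → ℂ} {r : ℝ} (hr : 0 < r)
    (h₁ : MeromorphicNFOn g₁ (Metric.ball 0 r)) (h₂ : MeromorphicNFOn g₂ (Metric.ball 0 r))
    (h : g₁ =ᶠ[𝓝[≠] 0] g₂) : EqOn g₁ g₂ (Metric.ball 0 r) := by
  intro z hz
  have hm : MeromorphicOn (g₁ - g₂) (Metric.ball 0 r) := h₁.meromorphicOn.sub h₂.meromorphicOn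
  have h0 : meromorphicOrderAt (g₁ - g₂) 0 = ⊤ := by
    rw [meromorphicOrderAt_eq_top_iff]
    filter_upwards [h] with w hw
    simp [hw]
  have hz' : meromorphicOrderAt (g₁ - g₂) z = ⊤ := by
    by_contra hne
    exact hm.meromorphicOrderAt_ne_top_of_isPreconnected
      (convex_ball (0 : ℂ) r).isPreconnected hz (Metric.mem_ball_self hr) hne h0
  rw [meromorphicOrderAt_eq_top_iff] at hz'
  have : g₁ =ᶠ[𝓝[≠] z] g₂ := by
    filter_upwards [hz'] with w hw
    simpa [sub_eq_zero] using hw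
  exact (((h₁ hz).eventuallyEq_nhdsNE_iff_eventuallyEq_nhds (h₂ hz)).1 this).eq_of_nhds

/-- gluing of meromorphic extensions -/
lemma glue {f : ℂ → ℂ} {R : ℝ} (hR : 0 < R)
    (h : ∀ r, 0 < r → r < R → ∃ g : ℂ → ℂ, MeromorphicOn g (Metric.ball 0 r) ∧ g =ᶠ[𝓝[≠] 0] f) :
    ∃ g : ℂ → ℂ, MeromorphicNFOn g (Metric.ball 0 R) ∧ g =ᶠ[𝓝[≠] 0] f := by
  have h' : ∀ r, ∃ g : ℂ → ℂ, 0 < r → r < R →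
      MeromorphicNFOn g (Metric.ball 0 r) ∧ g =ᶠ[𝓝[≠] 0] f := by
    intro r
    by_cases hr : 0 < r ∧ r < R
    · obtain ⟨g, hg, hgf⟩ := h r hr.1 hr.2
      refine ⟨toMeromorphicNFOn g (Metric.ball 0 r), fun _ _ =>
        ⟨meromorphicNFOn_toMeromorphicNFOn _ _, ?_⟩⟩
      exact (hg.toMeromorphicNFOn_eq_self_on_nhdsNE (Metric.mem_ball_self hr.1)).trans hgf
    · exact ⟨0, fun h1 h2 => absurd ⟨h1, h2⟩ hr⟩
  choose G hG using h'
  have agree : ∀ r s, 0 < r → r ≤ s → s < R → ∀ w : ℂ, ‖w‖ < r → G r w = G s w := by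
    intro r s hr hrs hs w hw
    have h1 := hG r hr (hrs.trans_lt hs)
    have h2 := hG s (hr.trans_le hrs) hs
    exact nf_eqOn hr h1.1 (fun x hx => h2.1 (Metric.ball_subset_ball hrs hx))
      (h1.2.trans h2.2.symm) (by simpa using hw)
  have agree2 : ∀ r s, 0 < r → r < R → 0 < s → s < R → ∀ w : ℂ, ‖w‖ < r → ‖w‖ < s →
      G r w = G s w := by
    intro r s hr hr' hs hs' w hw hw'
    rcases le_total r s with hle | hle
    · exact agree r s hr hle hs' w hw
    · exact (agree s r hs hle hr' w hw').symm
  let g : ℂ → ℂ := fun w => G ((‖w‖ + R) / 2) w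
  have loc : ∀ r, 0 < r → r < R → ∀ w : ℂ, ‖w‖ < r → g w = G r w := by
    intro r hr hr' w hw
    have := norm_nonneg w
    exact agree2 _ _ (by linarith) (by linarith) hr hr' w (by linarith) hw
  refine ⟨g, ?_, ?_⟩
  · intro z hz
    have hz' : ‖z‖ < R := by simpa using hz
    obtain ⟨r, hr1, hr2⟩ := exists_between hz'
    have hr0 := (norm_nonneg z).trans_lt hr1
    have hzr : z ∈ Metric.ball (0 : ℂ) r := by simpa using hr1
    rw [meromorphicNFAt_congr (g := G r)]
    · exact (hG r hr0 hr2).1 hzr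
    · filter_upwards [Metric.isOpen_ball.mem_nhds hzr] with w hw
      exact loc r hr0 hr2 w (by simpa using hw)
  · have hr0 : 0 < R / 2 := by linarith
    have hr1 : R / 2 < R := by linarith
    refine EventuallyEq.trans ?_ (hG _ hr0 hr1).2
    refine Filter.EventuallyEq.filter_mono ?_ nhdsWithin_le_nhds
    filter_upwards [Metric.isOpen_ball.mem_nhds (Metric.mem_ball_self hr0)] with w hw
    exact loc _ hr0 hr1 w (by simpa using hw)

end Merom
section Words
open Classical Topology

lemma shift_mem {A : Type*} [TopologicalSpace A] {X : Set (ℤ → A)} (hX : IsSubshift X)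
    {x : ℤ → A} (hx : x ∈ X) (k : ℤ) : (fun j => x (j + k)) ∈ X := by
  have hf : ∀ x ∈ X, (fun j => x (j + 1)) ∈ X := by
    intro x hx; rw [← hX.2]; exact ⟨x, hx, rfl⟩
  have hb : ∀ x ∈ X, (fun j => x (j + (-1))) ∈ X := by
    intro x hx
    rw [← hX.2] at hx
    obtain ⟨y, hy, rfl⟩ := hx
    simpa [shift] using hy
  induction k using Int.induction_on with
  | zero => simpa using hx
  | succ n ih => 
    have := hf _ ih
    convert this using 2
    ring_nf
  | pred n ih =>
    have := hb _ ih
    convert this using 2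
    ring_nf

variable {A : Type*} (X : Set (ℤ → A))

lemma mem_fol_snoc (u : List A) (c : A) (y : ℕ → A) :
    y ∈ fol X (u ++ [c]) ↔ y 0 = c ∧ ∃ y' ∈ fol X u, ∀ k, y' (k + 1) = y k := by
  constructor
  · rintro ⟨B, hB, h1, h2⟩
    refine ⟨?_, fun k => B ((u.length : ℤ) - 1 + k), ⟨B, hB, ?_, fun k => rfl⟩, ?_⟩
    · have := h1 ⟨u.length, by simp⟩
      rw [h2 0]
      simpa using this
    · intro i
      have := h1 ⟨i, by have := i.2; simp⟩
      rw [this]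
      simp [List.getElem_append_left]
    · intro k
      rw [h2 k]
      congr 1
      simp
  · rintro ⟨h0, y', ⟨B, hB, h1, h2⟩, h3⟩
    refine ⟨B, hB, ?_, ?_⟩
    · rintro ⟨i, hi⟩
      simp at hi
      rcases Nat.lt_or_eq_of_le hi with hlt | rfl
      · have := h1 ⟨i, hlt⟩
        simp [List.getElem_append_left hlt, this]
      · have e1 := h3 0
        rw [h2, h0] at e1
        simp only [List.get_eq_getElem, List.getElem_concat_length]
        rw [← e1]
        congr 1
        push_cast; ring
    · intro k
      rw [← h3 k, h2]
      congr 1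
      simp

lemma fol_append_congr {u v : List A} (h : fol X u = fol X v) (w : List A) :
    fol X (u ++ w) = fol X (v ++ w) := by
  induction w using List.reverseRecOn with
  | nil => simpa using h
  | append_singleton l c ih =>
    rw [← List.append_assoc, ← List.append_assoc]
    ext y
    rw [mem_fol_snoc, mem_fol_snoc, ih]

lemma fol_append_nonempty {u : List A} (w : List A) (h : (fol X (u ++ w)).Nonempty) :
    (fol X u).Nonempty := by
  induction w using List.reverseRecOn with
  | nil => simpa using h
  | append_singleton l c ih =>
    apply ih
    rw [← List.append_assoc] at h
    obtain ⟨y, hy⟩ := h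
    rw [mem_fol_snoc] at hy
    obtain ⟨_, y', hy', _⟩ := hy
    exact ⟨y', hy'⟩

noncomputable def red : List A → List A
  | [] => []
  | a :: w => if w = [] then [a] else if fol X (a :: w) = fol X w then red w else a :: w

def IsRed (s : List A) : Prop := s ≠ [] ∧ (s.tail = [] ∨ fol X s ≠ fol X s.tail)

lemma red_suffix (w : List A) : red X w <:+ w := by
  induction w with
  | nil => simp [red]
  | cons a w ih =>
    rw [red]
    split_ifs with h1 h2
    · simp [h1]
    · exact ih.trans (List.suffix_cons a w)
    · exact List.suffix_rfl

lemma red_ne_nil {w : List A} (h : w ≠ []) : red X w ≠ [] := by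
  induction w with
  | nil => exact absurd rfl h
  | cons a w ih =>
    rw [red]
    split_ifs with h1 h2
    · simp
    · exact ih h1
    · simp

lemma fol_red (w : List A) : fol X (red X w) = fol X w := by
  induction w with
  | nil => simp [red]
  | cons a w ih =>
    rw [red]
    split_ifs with h1 h2
    · simp [h1]
    · rw [ih, h2]
    · rfl

lemma red_isRed {w : List A} (h : w ≠ []) : IsRed X (red X w) := by
  induction w with
  | nil => exact absurd rfl h
  | cons a w ih =>
    rw [red]
    split_ifs with h1 h2
    · exact ⟨by simp, Or.inl rfl⟩
    · exact ih h1
    · exact ⟨by simp, Or.inr h2⟩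

section top
variable {X} [TopologicalSpace A] (hX : IsSubshift X)
include hX

lemma fol_cons_subset (a : A) (w : List A) : fol X (a :: w) ⊆ fol X w := by
  rintro y ⟨B, hB, h1, h2⟩
  refine ⟨_, shift_mem hX hB 1, ?_, ?_⟩
  · rintro ⟨i, hi⟩
    have := h1 ⟨i + 1, by simpa using hi⟩
    simpa using this
  · intro k
    rw [h2 k]
    simp only [List.length_cons]
    congr 1
    push_cast; ring

lemma fol_suffix {u v : List A} (h : u <:+ v) : fol X v ⊆ fol X u := by
  obtain ⟨t, rfl⟩ := h
  induction t with
  | nil => simp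
  | cons a t ih => exact (fol_cons_subset hX a _).trans ih

lemma red_unique {s w : List A} (hs : IsRed X s) (hsw : s <:+ w) (hf : fol X w = fol X s) :
    red X w = s := by
  induction w with
  | nil => simp at hsw; exact absurd hsw hs.1
  | cons a l ih =>
    rw [List.suffix_cons_iff] at hsw
    rcases hsw with rfl | hsl
    · rw [red]
      rcases hs.2 with h | h
      · simp at h; simp [h]
      · simp at h; simp [h]
    · have hl : l ≠ [] := by rintro rfl; simp at hsl; exact hs.1 hsl
      have he : fol X (a :: l) = fol X l :=
        (fol_cons_subset hX a l).antisymm ((fol_suffix hX hsl).trans hf.symm.subset)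
      rw [red, if_neg hl, if_pos he]
      exact ih hsl (he.symm.trans hf)

lemma red_append {u : List A} (hu : u ≠ []) (v : List A) :
    red X (red X u ++ v) = red X (u ++ v) := by
  symm
  apply red_unique hX
  · apply red_isRed; simp [red_ne_nil X hu]
  · refine (red_suffix X _).trans ?_
    obtain ⟨t, ht⟩ := red_suffix X u
    exact ⟨t, by rw [← List.append_assoc, ht]⟩
  · rw [fol_red]
    exact fol_append_congr X (fol_red X u).symm v

lemma red_self {s : List A} (hs : IsRed X s) : red X s = s :=
  red_unique hX hs List.suffix_rfl rfl

lemma red_len_append {u : List A} (hu : u ≠ []) (v : List A) :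
    (red X (u ++ v)).length ≤ (red X u).length + v.length := by
  rw [← red_append hX hu]
  simpa using (red_suffix X (red X u ++ v)).length_le

lemma lc_of_red {s : List A} (hs : IsRed X s) (h2 : 1 < s.length) (hne : (fol X s).Nonempty) :
    IsLeftConstraint X s := by
  refine ⟨hs.1, hne.ne_empty, ?_⟩
  have hle : fol X s ⊆ fol X s.tail := fol_suffix hX (List.tail_suffix s)
  refine hle.ssubset_of_ne ?_
  rcases hs.2 with h | h
  · have := congrArg List.length h
    simp at this; omega
  · exact h

lemma lc_of_append {u v : List A} (h : IsLeftConstraint X (u ++ v)) (hu : u ≠ []) :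
    IsLeftConstraint X u := by
  refine ⟨hu, ?_, ?_⟩
  · exact (fol_append_nonempty X v (nonempty_iff_ne_empty.2 h.2.1)).ne_empty
  · refine (fol_suffix hX (List.tail_suffix u)).ssubset_of_ne fun he => ?_
    apply h.2.2.ne
    rw [List.tail_append_of_ne_nil hu]
    exact fol_append_congr X he v
end top

/-- the word `x (i-m+1) … x i` -/
def wd (x : ℤ → A) (i : ℤ) : ℕ → List A
  | 0 => []
  | m + 1 => x (i - m) :: wd x i m

@[simp] lemma wd_length (x : ℤ → A) (i : ℤ) (m : ℕ) : (wd x i m).length = m := by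
  induction m with
  | zero => rfl
  | succ m ih => simp [wd, ih]

lemma wd_add (x : ℤ → A) (i : ℤ) (m k : ℕ) :
    wd x i (m + k) = wd x (i - k) m ++ wd x i k := by
  induction m with
  | zero => simp [wd]
  | succ m ih =>
    rw [Nat.add_right_comm, wd, ih, wd, List.cons_append]
    congr 2
    push_cast; ring

lemma wd_getElem (x : ℤ → A) (i : ℤ) (m j : ℕ) (hj : j < (wd x i m).length) :
    (wd x i m)[j] = x (i - m + 1 + j) := by
  induction m generalizing j with
  | zero => simp at hj
  | succ m ih =>
    rcases j with _ | j
    · simp [wd]; congr 1; ring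
    · simp only [wd, List.getElem_cons_succ]
      rw [ih]
      congr 1; push_cast; ring

lemma wd_congr {x y : ℤ → A} {i i' : ℤ} (m : ℕ) (h : ∀ k : ℕ, k < m → x (i - k) = y (i' - k)) :
    wd x i m = wd y i' m := by
  induction m with
  | zero => rfl
  | succ m ih => 
    rw [wd, wd, ih fun k hk => h k (by omega), h m (by omega)]

lemma eq_of_wd {x y : ℤ → A} {i i' : ℤ} {m : ℕ} (h : wd x i m = wd y i' m) (k : ℕ) (hk : k < m) :
    x (i - k) = y (i' - k) := by
  induction m with
  | zero => omega
  | succ m ih =>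
    rw [wd, wd, List.cons.injEq] at h
    rcases Nat.lt_succ_iff_lt_or_eq.1 hk with hlt | rfl
    · exact ih h.2 hlt
    · exact h.1

lemma wd_suffix (x : ℤ → A) (i : ℤ) {m k : ℕ} (h : k ≤ m) : wd x i k <:+ wd x i m := by
  obtain ⟨d, rfl⟩ := Nat.exists_eq_add_of_le h
  rw [add_comm, wd_add]
  exact List.suffix_append _ _

lemma suffix_wd_eq {x : ℤ → A} {i : ℤ} {m : ℕ} {s : List A} (h : s <:+ wd x i m) :
    s = wd x i s.length := by
  have h1 : s.length ≤ m := by simpa using h.length_le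
  exact ((List.suffix_of_suffix_length_le h (wd_suffix x i h1) (by simp)).eq_of_length (by simp))

section top2
variable {X} [TopologicalSpace A] (hX : IsSubshift X)
include hX

lemma fol_wd_nonempty {x : ℤ → A} (hx : x ∈ X) (i : ℤ) (m : ℕ) : (fol X (wd x i m)).Nonempty := by
  refine ⟨_, _, shift_mem hX hx (i - m + 1), ?_, fun k => rfl⟩
  rintro ⟨j, hj⟩
  simp only [List.get_eq_getElem]
  rw [wd_getElem]
  congr 1
  ring

lemma mem_of_fol [DiscreteTopology A] {x : ℤ → A}
    (h : ∀ k : ℕ, ∃ (i : ℤ) (m : ℕ), (k : ℤ) ≤ i ∧ i - m + 1 ≤ -(k : ℤ) ∧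
      (fol X (wd x i m)).Nonempty) : x ∈ X := by
  rw [← hX.1.closure_eq, mem_closure_iff]
  intro U hU hxU
  rw [isOpen_pi_iff] at hU
  obtain ⟨I, u, hu, hsub⟩ := hU x hxU
  obtain ⟨k, hk⟩ : ∃ k : ℕ, ∀ j ∈ I, |j| ≤ k := by
    refine ⟨I.sup Int.natAbs, fun j hj => ?_⟩
    rw [Int.abs_eq_natAbs]
    exact_mod_cast Finset.le_sup (f := Int.natAbs) hj
  obtain ⟨i, m, h1, h2, y, B, hB, hB1, -⟩ := h k
  refine ⟨_, hsub ?_, shift_mem hX hB (-(i - m + 1))⟩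
  intro j hj
  have hj' := abs_le.1 (hk j hj)
  have e : B (j + -(i - m + 1)) = x j := by
    have := hB1 ⟨(j - (i - m + 1)).toNat, by rw [wd_length]; omega⟩
    simp only [List.get_eq_getElem] at this
    rw [wd_getElem] at this
    have e2 : (((j - (i - m + 1)).toNat : ℕ) : ℤ) = j - (i - m + 1) := by omega
    rw [e2] at this
    rw [← sub_eq_add_neg, this]
    congr 1; ring
  simp only [e]
  exact (hu j hj).2
end top2
end Words

section Count
open Classical Topology

variable {A : Type*} [Fintype A]

noncomputable def words (A : Type*) [Fintype A] (n : ℕ) : Finset (List A) :=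
  (List.finite_length_eq A n).toFinset

@[simp] lemma mem_words {n : ℕ} {w : List A} : w ∈ words A n ↔ w.length = n := by
  simp [words]

lemma words_zero : words A 0 = {[]} := by
  ext w; simp

lemma words_succ_sum {E : Type*} [AddCommMonoid E] (n : ℕ) (f : List A → E) :
    ∑ w ∈ words A (n + 1), f w = ∑ c, ∑ w ∈ words A n, f (c :: w) := by
  rw [← Finset.sum_product' (s := Finset.univ) (t := words A n) (f := fun c w => f (c :: w))]
  symm
  apply Finset.sum_bij (fun p _ => p.1 :: p.2)
  · intro p hp; simp at hp ⊢; exact hp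
  · intro p _ q _ h; simp at h; exact Prod.ext h.1 h.2
  · intro w hw
    rcases w with _ | ⟨c, w⟩
    · simp at hw
    · exact ⟨(c, w), by simpa using hw, rfl⟩
  · intro p _; rfl

lemma words_card (n : ℕ) : (words A n).card = Fintype.card A ^ n := by
  induction n with
  | zero => simp [words_zero]
  | succ n ih =>
    have := words_succ_sum (A := A) n (fun _ => (1 : ℕ))
    simp [ih] at this
    rw [this]; ring

/-- concatenations of long good words -/
inductive IsQ0 (P : List A → Prop) (N : ℕ) : List A → Prop
  | nil : IsQ0 P N []
  | cons (u v : List A) : P u → N < u.length → IsQ0 P N v → IsQ0 P N (u ++ v)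

inductive IsQ (P : List A → Prop) (N : ℕ) : List A → Prop
  | nil : IsQ P N []
  | single (u : List A) : P u → IsQ P N u
  | cons (u v : List A) : P u → N < u.length → IsQ P N v → IsQ P N (u ++ v)

omit [Fintype A] in
lemma IsQ0.isQ {P : List A → Prop} {N : ℕ} {w : List A} (h : IsQ0 P N w) : IsQ P N w := by
  induction h with
  | nil => exact .nil
  | cons u v h1 h2 _ ih => exact .cons u v h1 h2 ih

omit [Fintype A] in
lemma IsQ0.append {P : List A → Prop} {N : ℕ} {w u : List A} (h : IsQ0 P N w) (hu : P u)
    (hl : N < u.length) : IsQ0 P N (w ++ u) := by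
  induction h with
  | nil => simpa using IsQ0.cons u [] hu hl .nil
  | cons u v h1 h2 _ ih => rw [List.append_assoc]; exact .cons u _ h1 h2 ih

omit [Fintype A] in
lemma IsQ.pre {P : List A → Prop} {N : ℕ} (hP : ∀ u v, u ≠ [] → P (u ++ v) → P u)
    {w : List A} (h : IsQ P N w) : ∀ p t, w = p ++ t → IsQ P N p := by
  induction h with
  | nil => intro p t h; simp at h; rw [h.1]; exact .nil
  | single u hu =>
    intro p t h
    by_cases hp : p = []
    · rw [hp]; exact .nil
    · exact .single _ (hP p t hp (h ▸ hu))
  | cons u v h1 h2 _ ih =>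
    intro p t h
    rcases List.append_eq_append_iff.1 h with ⟨a, h3, h4⟩ | ⟨a, h3, h4⟩
    · rw [h3]; exact .cons u a h1 h2 (ih _ _ h4)
    · by_cases hp : p = []
      · rw [hp]; exact .nil
      · exact .single _ (hP p a hp (h3 ▸ h1))

noncomputable def pF (P : List A → Prop) (n : ℕ) : Finset (List A) := (words A n).filter P

lemma mem_pF {P : List A → Prop} {n : ℕ} {w : List A} : w ∈ pF P n ↔ w.length = n ∧ P w := by
  simp [pF]

lemma q_sub (P : List A → Prop) (N m : ℕ) : pF (IsQ P N) m ⊆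
    ({[]} ∪ pF P m) ∪ (Finset.Ioc N m).biUnion fun l =>
      ((pF P l) ×ˢ (pF (IsQ P N) (m - l))).image fun p => p.1 ++ p.2 := by
  intro w hw
  rw [mem_pF] at hw
  obtain ⟨hl, hw⟩ := hw
  cases hw with
  | nil => simp
  | single u hu => simp [mem_pF, hl, hu]
  | cons u v h1 h2 h3 =>
    rw [List.length_append] at hl
    apply Finset.mem_union_right
    simp only [Finset.mem_biUnion, Finset.mem_Ioc, Finset.mem_image, Finset.mem_product, mem_pF]
    exact ⟨u.length, ⟨h2, by omega⟩, (u, v), ⟨⟨rfl, h1⟩, by simp; omega, h3⟩, rfl⟩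

lemma q_bound (P : List A → Prop) (N : ℕ) {ρ ρ' C₀ : ℝ} (hρ : 0 < ρ) (hρρ : ρ ≤ ρ') (h1 : 1 ≤ ρ')
    (hC : 0 ≤ C₀)
    (hlong : ∀ l, N < l → ((pF P l).card : ℝ) ≤ ρ ^ l)
    (hall : ∀ l, ((pF P l).card : ℝ) ≤ C₀ * ρ ^ l)
    (hgeo : ∀ m, ∑ l ∈ Finset.Ioc N m, (ρ / ρ') ^ l ≤ 1 / 2) (m : ℕ) :
    ((pF (IsQ P N) m).card : ℝ) ≤ 2 * (1 + C₀) * ρ' ^ m := by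
  have hρ' : 0 < ρ' := hρ.trans_le hρρ
  induction m using Nat.strong_induction_on with
  | _ m ih =>
    have c1 := Finset.card_le_card (q_sub P N m)
    have c2 := c1.trans ((Finset.card_union_le _ _).trans
      (add_le_add (Finset.card_union_le _ _) Finset.card_biUnion_le))
    have c3 : ((pF (IsQ P N) m).card : ℝ) ≤ 1 + (pF P m).card +
        ∑ l ∈ Finset.Ioc N m, ((pF P l).card : ℝ) * (pF (IsQ P N) (m - l)).card := by
      refine le_trans (Nat.cast_le.2 c2) ?_
      push_cast
      simp only [Finset.card_singleton, Nat.cast_one]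
      gcongr with l hl
      have := Finset.card_image_le (s := (pF P l) ×ˢ (pF (IsQ P N) (m - l)))
        (f := fun p => p.1 ++ p.2)
      rw [Finset.card_product] at this
      exact_mod_cast this
    have c4 : ∑ l ∈ Finset.Ioc N m, ((pF P l).card : ℝ) * (pF (IsQ P N) (m - l)).card ≤
        ∑ l ∈ Finset.Ioc N m, (2 * (1 + C₀) * ρ' ^ m) * (ρ / ρ') ^ l := by
      apply Finset.sum_le_sum
      intro l hl
      rw [Finset.mem_Ioc] at hl
      calc _ ≤ ρ ^ l * (2 * (1 + C₀) * ρ' ^ (m - l)) := by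
            gcongr
            · exact hlong l hl.1
            · exact ih _ (by omega)
        _ = _ := by
            obtain ⟨d, rfl⟩ := Nat.exists_eq_add_of_le hl.2
            rw [Nat.add_sub_cancel_left, pow_add, div_pow]
            field_simp
    rw [← Finset.mul_sum] at c4
    have c5 := hgeo m
    have c6 : 1 ≤ ρ' ^ m := one_le_pow₀ h1
    have c7 : ((pF P m).card : ℝ) ≤ C₀ * ρ' ^ m := (hall m).trans (by gcongr)
    have c8 : 2 * (1 + C₀) * ρ' ^ m * ∑ l ∈ Finset.Ioc N m, (ρ / ρ') ^ l
      ≤ 2 * (1 + C₀) * ρ' ^ m * (1 / 2) := by gcongr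
    nlinarith

lemma geo_tail {r : ℝ} (h0 : 0 < r) (h1 : r < 1) (N₀ : ℕ) : ∃ N, N₀ ≤ N ∧ ∀ m, ∑ l ∈ Finset.Ioc N m, r ^ l ≤ 1 / 2 := by
  have ht : Tendsto (fun N : ℕ => r ^ N * (1 - r)⁻¹) atTop (𝓝 (0 * (1 - r)⁻¹)) :=
    (tendsto_pow_atTop_nhds_zero_of_lt_one h0.le h1).mul_const _
  rw [zero_mul] at ht
  obtain ⟨N, hN, hN0⟩ := ((ht.eventually_lt_const (by norm_num : (0:ℝ) < 1/2)).and
    (eventually_ge_atTop N₀)).exists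
  refine ⟨N, hN0, fun m => le_trans ?_ hN.le⟩
  have hs := summable_geometric_of_lt_one h0.le h1
  calc _ ≤ ∑ l ∈ Finset.Ico N (m + 1), r ^ l := by
        apply Finset.sum_le_sum_of_subset_of_nonneg
        · intro l; simp; omega
        · intros; positivity
    _ = ∑ k ∈ Finset.range (m + 1 - N), r ^ (N + k) := by rw [Finset.sum_Ico_eq_sum_range]
    _ = r ^ N * ∑ k ∈ Finset.range (m + 1 - N), r ^ k := by simp [pow_add, Finset.mul_sum]
    _ ≤ r ^ N * (1 - r)⁻¹ := by
        gcongr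
        rw [← tsum_geometric_of_lt_one h0.le h1]
        exact hs.sum_le_tsum _ (fun _ _ => by positivity)

lemma log_card_le {f : ℕ → ℕ} {K : ℕ} (hK : 1 ≤ K) (hf : ∀ n, f n ≤ K ^ n) (n : ℕ) :
    Real.log (f n) / n ≤ Real.log K := by
  rcases Nat.eq_zero_or_pos n with rfl | hn
  · simp; exact Real.log_nonneg (by exact_mod_cast hK)
  rw [div_le_iff₀ (by positivity)]
  rcases Nat.eq_zero_or_pos (f n) with h | h
  · rw [h]; simp
    have : 0 ≤ Real.log K := Real.log_nonneg (by exact_mod_cast hK)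
    positivity
  · have : (f n : ℝ) ≤ (K : ℝ) ^ n := by exact_mod_cast hf n
    have := Real.log_le_log (by positivity) this
    rw [Real.log_pow] at this; linarith

lemma le_pow_of_log {f n : ℕ} {ρ : ℝ} (hρ : 0 < ρ) (hn : 0 < n) (h : Real.log f / n < Real.log ρ) :
    (f : ℝ) ≤ ρ ^ n := by
  rcases Nat.eq_zero_or_pos f with h' | h'
  · rw [h']; simp; positivity
  rw [div_lt_iff₀ (by positivity)] at h
  rw [← Real.log_le_log_iff (by positivity) (by positivity), Real.log_pow]; linarith

lemma growth1 {f : ℕ → ℕ} {K : ℕ} (hK : 1 ≤ K) (hf : ∀ n, f n ≤ K ^ n) {ρ : ℝ} (hρ : 0 < ρ)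
    (h : limsup (fun n : ℕ => Real.log (f n) / (n : ℝ)) atTop < Real.log ρ) :
    ∀ᶠ n in atTop, (f n : ℝ) ≤ ρ ^ n := by
  have hb : IsBoundedUnder (· ≤ ·) atTop (fun n : ℕ => Real.log (f n) / (n : ℝ)) :=
    isBoundedUnder_of ⟨_, log_card_le hK hf⟩
  filter_upwards [eventually_lt_of_limsup_lt h hb, eventually_gt_atTop 0] with n hn h0
  exact le_pow_of_log hρ h0 hn

lemma growth2_bdd {f : ℕ → ℕ} {K : ℕ} (hK : 1 ≤ K) (hf : ∀ n, f n ≤ K ^ n) :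
    IsBoundedUnder (· ≤ ·) atTop (fun n : ℕ => max 0 (Real.log (f n)) / (n : ℝ)) := by
  refine isBoundedUnder_of ⟨Real.log K, fun n => ?_⟩
  rcases max_choice 0 (Real.log (f n)) with h | h
  · rw [h]; simp; exact Real.log_nonneg (by exact_mod_cast hK)
  · rw [h]; exact log_card_le hK hf n

lemma growth2 {f : ℕ → ℕ} {K : ℕ} (hK : 1 ≤ K) (hf : ∀ n, f n ≤ K ^ n) {ρ : ℝ} (hρ : 0 < ρ)
    (h : limsup (fun n : ℕ => max 0 (Real.log (f n)) / (n : ℝ)) atTop < Real.log ρ) :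
    ∀ᶠ n in atTop, (f n : ℝ) ≤ ρ ^ n := by
  filter_upwards [eventually_lt_of_limsup_lt h (growth2_bdd hK hf), eventually_gt_atTop 0] with n hn h0
  apply le_pow_of_log hρ h0 (lt_of_le_of_lt _ hn)
  gcongr
  exact le_max_right _ _

lemma growth2_nonneg {f : ℕ → ℕ} {K : ℕ} (hK : 1 ≤ K) (hf : ∀ n, f n ≤ K ^ n) :
    0 ≤ limsup (fun n : ℕ => max 0 (Real.log (f n)) / (n : ℝ)) atTop := by
  apply le_limsup_of_frequently_le _ (growth2_bdd hK hf)
  apply Frequently.of_forall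
  intro n; positivity

lemma all_bound {f : ℕ → ℕ} {ρ : ℝ} (hρ : 0 < ρ) (h : ∀ᶠ n in atTop, (f n : ℝ) ≤ ρ ^ n) :
    ∃ C : ℝ, 1 ≤ C ∧ ∀ n, (f n : ℝ) ≤ C * ρ ^ n := by
  obtain ⟨N, hN⟩ := eventually_atTop.1 h
  refine ⟨1 + ∑ k ∈ Finset.range N, f k / ρ ^ k, ?_, fun n => ?_⟩
  · have : 0 ≤ ∑ k ∈ Finset.range N, f k / ρ ^ k := Finset.sum_nonneg fun _ _ => by positivity
    linarith
  · by_cases hn : N ≤ n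
    · have : 0 ≤ ∑ k ∈ Finset.range N, f k / ρ ^ k := Finset.sum_nonneg fun _ _ => by positivity
      have := hN n hn
      have : 0 < ρ ^ n := by positivity
      nlinarith
    · have h1 : f n / ρ ^ n ≤ ∑ k ∈ Finset.range N, f k / ρ ^ k :=
        Finset.single_le_sum (f := fun k => f k / ρ ^ k) (fun _ _ => by positivity)
          (by simp; omega)
      have h2 : 0 < ρ ^ n := by positivity
      rw [div_le_iff₀ h2] at h1
      nlinarith

lemma lc_card (X : Set (ℤ → A)) (n : ℕ) :
    Nat.card ↥(LC X n) = (pF (IsLeftConstraint X) n).card := by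
  rw [Nat.card_coe_set_eq, ← Set.ncard_coe_finset]
  congr 1
  ext w; simp [LC, mem_pF]

lemma pF_le (P : List A → Prop) (n : ℕ) : (pF P n).card ≤ Fintype.card A ^ n := by
  rw [← words_card]; exact Finset.card_filter_le _ _

lemma lang_card (X : Set (ℤ → A)) (n : ℕ) :
    Nat.card ↥(Lang X n) = (pF (fun w => ∃ x ∈ X, OccursAt w x 0) n).card := by
  rw [Nat.card_coe_set_eq, ← Set.ncard_coe_finset]
  congr 1
  ext w; simp [Lang, mem_pF]

/-- choice of constants -/
lemma choose_N [Nonempty A] (X : Set (ℤ → A)) {ρ' : ℝ} (h : Real.exp (hC X) < ρ') :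
    1 < ρ' ∧ ∃ N, 1 ≤ N ∧ ∃ C : ℝ, 0 < C ∧
      ∀ m, ((pF (IsQ (IsLeftConstraint X) N) m).card : ℝ) ≤ C * ρ' ^ m := by
  have hK : 1 ≤ Fintype.card A := Fintype.card_pos
  have hf : ∀ n, (pF (IsLeftConstraint X) n).card ≤ Fintype.card A ^ n := pF_le _
  have he : hC X = limsup (fun n : ℕ =>
      max 0 (Real.log ((pF (IsLeftConstraint X) n).card)) / (n : ℝ)) atTop := by
    simp only [hC, lc_card]
  have h0 : 0 ≤ hC X := by rw [he]; exact growth2_nonneg hK hf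
  obtain ⟨ρ, hρ1, hρ2⟩ := exists_between h
  have hone : 1 ≤ Real.exp (hC X) := Real.one_le_exp h0
  have hρ : 0 < ρ := by linarith
  have hg := growth2 hK hf hρ (by rw [← he]; rwa [Real.lt_log_iff_exp_lt hρ])
  obtain ⟨C₀, hC0, hall⟩ := all_bound hρ hg
  obtain ⟨N₀, hN0⟩ := eventually_atTop.1 hg
  obtain ⟨N, hN, hgeo⟩ := geo_tail (r := ρ / ρ') (div_pos hρ (by linarith))
    (by rw [div_lt_one (by linarith)]; exact hρ2) (max 1 N₀)
  refine ⟨by linarith, N, le_trans (le_max_left _ _) hN, 2 * (1 + C₀), by positivity, ?_⟩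
  exact q_bound _ N hρ hρ2.le (by linarith) (by linarith)
    (fun l hl => hN0 l (by have := le_trans (le_max_right 1 N₀) hN; omega)) hall hgeo

end Count

section Per
open Classical Topology

variable {A : Type*}

lemma shift_iter (x : ℤ → A) (n : ℕ) : shift^[n] x = fun j => x (j + n) := by
  induction n generalizing x with
  | zero => simp
  | succ n ih =>
    rw [Function.iterate_succ_apply, ih]
    funext j
    simp only [shift]
    congr 1; push_cast; ring

lemma shift_per (x : ℤ → A) (n : ℕ) : shift^[n] x = x ↔ Function.Periodic x (n : ℤ) := by
  rw [shift_iter]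
  constructor
  · intro h j; exact congrFun h j
  · intro h; funext j; exact h j

lemma wd_per {x : ℤ → A} {n : ℕ} (h : Function.Periodic x (n : ℤ)) (i k : ℤ) (m : ℕ) :
    wd x (i + k * n) m = wd x i m := by
  apply wd_congr
  intro j _
  have := h.int_mul k (i - j)
  simp at this
  rw [← this]
  congr 1; ring

lemma per_ext {x y : ℤ → A} {n : ℕ} (hn : 0 < n) (hx : Function.Periodic x (n : ℤ))
    (hy : Function.Periodic y (n : ℤ)) {i : ℤ} (h : wd x i n = wd y i n) : x = y := by
  funext j
  have hn' : (0 : ℤ) < n := by exact_mod_cast hn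
  have h0 := Int.emod_nonneg (i - j) hn'.ne'
  have h1 := Int.emod_lt_of_pos (i - j) hn'
  have h2 := Int.emod_add_mul_ediv (i - j) n
  have e := eq_of_wd h ((i - j) % n).toNat (by omega)
  have e2 : (((i - j) % n).toNat : ℤ) = (i - j) % n := by omega
  rw [e2] at e
  have e3 : i - (i - j) % n = j + ((i - j) / n) * n := by linarith
  rw [e3] at e
  have a1 := hx.int_mul ((i - j) / n) j
  have a2 := hy.int_mul ((i - j) / n) j
  simp only [Int.cast_id] at a1 a2
  rw [← a1, ← a2]; exact e

lemma exists_per {w : List A} {n : ℕ} (hn : 0 < n) (hw : w.length = n) :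
    ∃ x : ℤ → A, Function.Periodic x (n : ℤ) ∧ wd x 0 n = w := by
  have hn' : (0 : ℤ) < n := by exact_mod_cast hn
  have hlt : ∀ i : ℤ, ((i - 1) % n).toNat < w.length := by
    intro i
    have h0 := Int.emod_nonneg (i - 1) hn'.ne'
    have h1 := Int.emod_lt_of_pos (i - 1) hn'
    omega
  have hper : Function.Periodic (fun i : ℤ => w[((i - 1) % n).toNat]'(hlt i)) (n : ℤ) := by
    intro i
    simp only
    congr 2
    rw [show i + (n : ℤ) - 1 = (i - 1) + n by ring, Int.add_emod_right]
  refine ⟨fun i => w[((i - 1) % n).toNat]'(hlt i), hper, ?_⟩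
  apply List.ext_getElem
  · simp [hw]
  · intro j h1 h2
    rw [wd_getElem]
    congr 1
    rw [show (0 - (n : ℤ) + 1 + j - 1) = j + (-1) * n by ring, Int.add_mul_emod_self_right,
      Int.emod_eq_of_lt (by omega) (by omega)]
    simp

variable [Fintype A] {X : Set (ℤ → A)}

/-- fixed points of the `n`-th power satisfying `T`, coded by words -/
noncomputable def perW (X : Set (ℤ → A)) (T : (ℤ → A) → Prop) (n : ℕ) : Finset (List A) :=
  pF (fun w => ∃ x ∈ X, Function.Periodic x (n : ℤ) ∧ T x ∧ wd x 0 n = w) n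

lemma perCount_eq {n : ℕ} (hn : 0 < n) (X : Set (ℤ → A)) :
    perCount X n = (perW X (fun _ => True) n).card := by
  rw [perCount, Nat.card_coe_set_eq, ← Set.ncard_coe_finset]
  apply Set.ncard_congr (fun x _ => wd x 0 n)
  · rintro x ⟨h1, h2⟩
    simp only [perW, Finset.mem_coe, mem_pF, wd_length, true_and]
    exact ⟨x, h1, (shift_per x n).1 h2, rfl⟩
  · rintro x y ⟨h1, h2⟩ ⟨h3, h4⟩ h
    exact per_ext hn ((shift_per x n).1 h2) ((shift_per y n).1 h4) h
  · intro w hw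
    simp only [perW, Finset.mem_coe, mem_pF, true_and] at hw
    obtain ⟨-, x, h1, h2, h3⟩ := hw
    exact ⟨x, ⟨h1, (shift_per x n).2 h2⟩, h3⟩

def Hi (X : Set (ℤ → A)) (N : ℕ) (x : ℤ → A) : Prop :=
  ∀ i : ℤ, ∃ l, N < l ∧ IsLeftConstraint X (wd x i l)

lemma perW_split {n : ℕ} (hn : 0 < n) (X : Set (ℤ → A)) (T : (ℤ → A) → Prop) :
    (perW X (fun _ => True) n).card = (perW X T n).card + (perW X (fun x => ¬ T x) n).card := by
  rw [← Finset.card_union_of_disjoint]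
  · congr 1
    ext w
    simp only [perW, mem_pF, Finset.mem_union]
    constructor
    · rintro ⟨h, x, h1, h2, -, h3⟩
      by_cases hT : T x
      · exact Or.inl ⟨h, x, h1, h2, hT, h3⟩
      · exact Or.inr ⟨h, x, h1, h2, hT, h3⟩
    · rintro (⟨h, x, h1, h2, -, h3⟩ | ⟨h, x, h1, h2, -, h3⟩)
      · exact ⟨h, x, h1, h2, trivial, h3⟩
      · exact ⟨h, x, h1, h2, trivial, h3⟩
  · rw [Finset.disjoint_left]
    intro w h h'
    simp only [perW, mem_pF] at h h'
    obtain ⟨-, x, h1, h2, h3, h4⟩ := h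
    obtain ⟨-, y, g1, g2, g3, g4⟩ := h'
    rw [per_ext hn h2 g2 (h4.trans g4.symm)] at h3
    exact g3 h3

lemma perW_le (X : Set (ℤ → A)) (T : (ℤ → A) → Prop) (n : ℕ) :
    (perW X T n).card ≤ Fintype.card A ^ n := pF_le _ _

omit [Fintype A] in
lemma hi_tile {N : ℕ} {x : ℤ → A} (h : Hi X N x) (k : ℕ) :
    ∀ i : ℤ, ∃ L, k ≤ L ∧ IsQ0 (IsLeftConstraint X) N (wd x i L) := by
  induction k with
  | zero => intro i; exact ⟨0, le_rfl, .nil⟩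
  | succ k ih =>
    intro i
    obtain ⟨l, hl, h1⟩ := h i
    obtain ⟨L, hL, h2⟩ := ih (i - l)
    refine ⟨L + l, by omega, ?_⟩
    rw [wd_add]
    exact h2.append h1 (by simpa using hl)

lemma hi_count [TopologicalSpace A] (hX : IsSubshift X) {N n : ℕ} (hn : 0 < n) :
    (perW X (Hi X N) n).card ≤ n * (pF (IsQ (IsLeftConstraint X) N) n).card := by
  have hn' : (0 : ℤ) < n := by exact_mod_cast hn
  have key : ∀ w ∈ perW X (Hi X N) n, ∃ p ∈ Finset.range n ×ˢ pF (IsQ (IsLeftConstraint X) N) n,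
      ∃ x, Function.Periodic x (n : ℤ) ∧ wd x 0 n = w ∧ wd x (-(p.1 : ℤ)) n = p.2 := by
    intro w hw
    simp only [perW, mem_pF] at hw
    obtain ⟨-, x, h1, h2, h3, h4⟩ := hw
    obtain ⟨L, hL, hQ⟩ := hi_tile h3 n 0
    obtain ⟨d, rfl⟩ := Nat.exists_eq_add_of_le hL
    rw [wd_add] at hQ
    have hQ2 := hQ.isQ.pre (fun u v hu huv => lc_of_append hX huv hu) _ _ rfl
    refine ⟨(d % n, wd x (-((d % n : ℕ) : ℤ)) n), ?_, x, h2, h4, rfl⟩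
    simp only [Finset.mem_product, Finset.mem_range, mem_pF, wd_length, true_and]
    refine ⟨Nat.mod_lt _ hn, ?_⟩
    have := wd_per h2 (0 - (d : ℤ)) (d / n) n
    rw [← this] at hQ2
    convert hQ2 using 2
    have := Int.emod_add_mul_ediv (d : ℤ) n
    push_cast
    linarith
  choose! f hf x hx using key
  rw [← Finset.card_range n, ← Finset.card_product]
  rw [Finset.card_range]
  apply Finset.card_le_card_of_injOn f (fun w hw => hf w hw)
  intro w hw w' hw' he
  obtain ⟨a1, a2, a3⟩ := hx w hw
  obtain ⟨b1, b2, b3⟩ := hx w' hw'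
  rw [he] at a3
  rw [← a2, ← b2, per_ext hn a1 b1 (a3.trans b3.symm)]

end Per

section Graph
open Classical Topology

variable {A : Type*} (X : Set (ℤ → A))

noncomputable def st : List A → List A → List A
  | a, [] => a
  | a, c :: w => st (red X (a ++ [c])) w

def ok (R : List A → Prop) : List A → List A → Prop
  | _, [] => True
  | a, c :: w => R (red X (a ++ [c])) ∧ ok R (red X (a ++ [c])) w

noncomputable def pc [Fintype A] (R : List A → Prop) (f : List A → ℂ) : ℕ → List A → ℂ
  | 0, a => f a
  | n + 1, a => ∑ c, if R (red X (a ++ [c])) then pc R f n (red X (a ++ [c])) else 0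

lemma pc_eq [Fintype A] (R : List A → Prop) (f : List A → ℂ) (n : ℕ) (a : List A) :
    pc X R f n a = ∑ w ∈ words A n, if ok X R a w then f (st X a w) else 0 := by
  induction n generalizing a with
  | zero => simp [pc, words_zero, ok, st]
  | succ n ih =>
    rw [words_succ_sum, pc]
    refine Finset.sum_congr rfl fun c _ => ?_
    split_ifs with h
    · rw [ih]; simp [ok, st, h]
    · simp [ok, h]

lemma ok_mono {R R' : List A → Prop} (h : ∀ b, R b → R' b) (w : List A) :
    ∀ a, ok X R a w → ok X R' a w := by
  induction w with
  | nil => intro a _; trivial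
  | cons c w ih => intro a ha; exact ⟨h _ ha.1, ih _ ha.2⟩

lemma ok_end {R : List A → Prop} (w : List A) : ∀ a, w ≠ [] → ok X R a w → R (st X a w) := by
  induction w with
  | nil => intro a h; exact absurd rfl h
  | cons c w ih =>
    intro a _ h
    rw [st]
    by_cases hw : w = []
    · subst hw; exact h.1
    · exact ih _ hw h.2

noncomputable def TM [Fintype A] {ι κ : Type*} (v : ι → List A) (v' : κ → List A) : Matrix ι κ ℂ :=
  Matrix.of fun i j => ∑ c, if red X (v i ++ [c]) = v' j then 1 else 0

lemma TM_mul [Fintype A] {ι κ μ : Type*} [Fintype κ] (v : ι → List A) (v' : κ → List A)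
    (hv : Function.Injective v') (F : Matrix κ μ ℂ) (f : μ → List A → ℂ)
    (hF : ∀ k j, F k j = f j (v' k)) (i : ι) (j : μ) :
    (TM X v v' * F) i j = pc X (· ∈ Set.range v') (f j) 1 (v i) := by
  simp only [Matrix.mul_apply, TM, Matrix.of_apply, hF, Finset.sum_mul, pc]
  rw [Finset.sum_comm]
  refine Finset.sum_congr rfl fun c _ => ?_
  split_ifs with h
  · obtain ⟨k, hk⟩ := h
    rw [← hk, Finset.sum_eq_single k]
    · simp
    · intro k' _ hk'
      rw [if_neg fun h => hk' (hv h.symm)]; simp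
    · simp
  · apply Finset.sum_eq_zero
    intro k _
    rw [if_neg fun h' => h ⟨k, h'.symm⟩]; simp

lemma pc_succ [Fintype A] (R : List A → Prop) (f : List A → ℂ) (n : ℕ) (a : List A) :
    pc X R (pc X R f n) 1 a = pc X R f (n + 1) a := by
  simp [pc]

lemma TM_pow_mul [Fintype A] {κ μ : Type*} [Fintype κ] [DecidableEq κ] (v : κ → List A)
    (hv : Function.Injective v) (F : Matrix κ μ ℂ) (f : μ → List A → ℂ)
    (hF : ∀ k j, F k j = f j (v k)) (n : ℕ) (i : κ) (j : μ) :
    (TM X v v ^ n * F) i j = pc X (· ∈ Set.range v) (f j) n (v i) := by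
  induction n generalizing i j with
  | zero => simp [pc, hF]
  | succ n ih =>
    rw [pow_succ', Matrix.mul_assoc,
      TM_mul X v v hv _ (fun j => pc X (· ∈ Set.range v) (f j) n) ih, pc_succ]

lemma TM_trace [Fintype A] {κ : Type*} [Fintype κ] [DecidableEq κ] (v : κ → List A)
    (hv : Function.Injective v) (n : ℕ) :
    (TM X v v ^ n).trace = ∑ i, ∑ w ∈ words A n,
      if ok X (· ∈ Set.range v) (v i) w ∧ st X (v i) w = v i then 1 else 0 := by
  rw [Matrix.trace]
  refine Finset.sum_congr rfl fun i _ => ?_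
  have := TM_pow_mul X v hv (1 : Matrix κ κ ℂ) (fun j a => if a = v j then 1 else 0)
    (fun k j => by simp [Matrix.one_apply, hv.eq_iff]) n i i
  rw [Matrix.mul_one] at this
  rw [Matrix.diag_apply, this, pc_eq]
  refine Finset.sum_congr rfl fun w _ => ?_
  split_ifs <;> simp_all

def IsVx (a : List A) : Prop := IsRed X a ∧ (fol X a).Nonempty

noncomputable def vF [Fintype A] (N K : ℕ) : Finset (List A) :=
  ((Finset.range (K + 1)).biUnion (words A)).filter fun a => IsVx X a ∧ N < a.length

lemma mem_vF [Fintype A] {N K : ℕ} {a : List A} :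
    a ∈ vF X N K ↔ IsVx X a ∧ N < a.length ∧ a.length ≤ K := by
  simp [vF]; tauto

abbrev v1 [Fintype A] (N K : ℕ) : vF X N K → List A := Subtype.val

lemma vF_split [Fintype A] {N K : ℕ} (h : N ≤ K) : vF X 0 K = vF X 0 N ∪ vF X N K := by
  ext a
  simp only [Finset.mem_union, mem_vF]
  constructor
  · rintro ⟨h1, h2, h3⟩
    by_cases h : a.length ≤ N
    · exact Or.inl ⟨h1, h2, h⟩
    · exact Or.inr ⟨h1, by omega, h3⟩
  · rintro (⟨h1, h2, h3⟩ | ⟨h1, h2, h3⟩)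
    · exact ⟨h1, h2, by omega⟩
    · exact ⟨h1, by omega, h3⟩

lemma vF_disj [Fintype A] {N K : ℕ} : Disjoint (vF X 0 N) (vF X N K) := by
  rw [Finset.disjoint_left]
  intro a; simp only [mem_vF]; omega

noncomputable def MM [Fintype A] (N K : ℕ) :
    Matrix (vF X 0 N ⊕ vF X N K) (vF X 0 N ⊕ vF X N K) ℂ :=
  Matrix.fromBlocks (TM X (v1 X 0 N) (v1 X 0 N)) (TM X (v1 X 0 N) (v1 X N K))
    (TM X (v1 X N K) (v1 X 0 N)) (TM X (v1 X N K) (v1 X N K))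

lemma MM_eq [Fintype A] (N K : ℕ) : MM X N K =
    TM X (Sum.elim (v1 X 0 N) (v1 X N K)) (Sum.elim (v1 X 0 N) (v1 X N K)) := by
  ext i j
  rcases i with i | i <;> rcases j with j | j <;> rfl

lemma elim_inj [Fintype A] (N K : ℕ) :
    Function.Injective (Sum.elim (v1 X 0 N) (v1 X N K)) := by
  apply Function.Injective.sumElim Subtype.val_injective Subtype.val_injective
  rintro ⟨a, ha⟩ ⟨b, hb⟩ h
  simp at h; subst h
  exact Finset.disjoint_left.1 (vF_disj X) ha hb

lemma MM_trace [Fintype A] {N K : ℕ} (h : N ≤ K) (n : ℕ) :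
    (MM X N K ^ n).trace = ∑ a ∈ vF X 0 K, ∑ w ∈ words A n,
      if ok X (· ∈ vF X 0 K) a w ∧ st X a w = a then 1 else 0 := by
  have hr : (fun b => b ∈ Set.range (Sum.elim (v1 X 0 N) (v1 X N K))) = (· ∈ vF X 0 K) := by
    funext b
    rw [Set.Sum.elim_range, vF_split X h]
    simp
  rw [MM_eq, TM_trace X _ (elim_inj X N K), Fintype.sum_sum_type, hr, vF_split X h,
    Finset.sum_union (vF_disj X), ← vF_split X h]
  simp only [Sum.elim_inl, Sum.elim_inr]
  congr 1
  · exact Finset.sum_coe_sort (vF X 0 N) (fun a => ∑ w ∈ words A n,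
      if ok X (· ∈ vF X 0 K) a w ∧ st X a w = a then (1:ℂ) else 0)
  · exact Finset.sum_coe_sort (vF X N K) (fun a => ∑ w ∈ words A n,
      if ok X (· ∈ vF X 0 K) a w ∧ st X a w = a then (1:ℂ) else 0)

lemma D_trace [Fintype A] {N K : ℕ} (h : N ≤ K) {n : ℕ} (hn : 0 < n) :
    (TM X (v1 X N K) (v1 X N K) ^ n).trace = ∑ a ∈ vF X 0 K, ∑ w ∈ words A n,
      if ok X (· ∈ vF X N K) a w ∧ st X a w = a then 1 else 0 := by
  have hr : (fun b => b ∈ Set.range (v1 X N K)) = (· ∈ vF X N K) := by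
    funext b
    simp [v1]
  rw [TM_trace X _ Subtype.val_injective, hr]
  rw [vF_split X h, Finset.sum_union (vF_disj X), Finset.sum_eq_zero (s := vF X 0 N), zero_add]
  · exact Finset.sum_coe_sort (vF X N K) (fun a => ∑ w ∈ words A n,
      if ok X (· ∈ vF X N K) a w ∧ st X a w = a then (1:ℂ) else 0)
  · intro a ha
    apply Finset.sum_eq_zero
    intro w hw
    rw [if_neg]
    rintro ⟨h1, h2⟩
    have := ok_end X w a (by rintro rfl; simp at hw; omega) h1
    rw [h2] at this
    exact Finset.disjoint_left.1 (vF_disj X) ha this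

noncomputable def lowF [Fintype A] (N K : ℕ) (w : List A) : Finset (List A) :=
  (vF X 0 K).filter fun a => st X a w = a ∧ ok X (· ∈ vF X 0 K) a w ∧ ¬ ok X (· ∈ vF X N K) a w

lemma trace_diff [Fintype A] {N K : ℕ} (h : N ≤ K) {n : ℕ} (hn : 0 < n) :
    (MM X N K ^ n).trace - (TM X (v1 X N K) (v1 X N K) ^ n).trace =
      ((∑ w ∈ words A n, (lowF X N K w).card : ℕ) : ℂ) := by
  rw [MM_trace X h, D_trace X h hn, ← Finset.sum_sub_distrib]
  simp only [lowF, Finset.card_filter]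
  push_cast
  rw [Finset.sum_comm]
  refine Finset.sum_congr rfl fun a _ => ?_
  rw [← Finset.sum_sub_distrib]
  refine Finset.sum_congr rfl fun w _ => ?_
  have hm : ok X (· ∈ vF X N K) a w → ok X (· ∈ vF X 0 K) a w :=
    ok_mono X (fun b hb => by rw [vF_split X h]; exact Finset.mem_union_right _ hb) w a
  by_cases h1 : st X a w = a <;> by_cases h2 : ok X (· ∈ vF X N K) a w <;>
    by_cases h3 : ok X (· ∈ vF X 0 K) a w <;> simp_all

/-- coefficients of the reduced operator -/
noncomputable def lk [Fintype A] (R : List A → Prop) (m : ℕ) (a b : List A) : ℂ :=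
  pc X R (fun e => ∑ c, if red X (e ++ [c]) = b then 1 else 0) (m + 1) a

lemma BDC [Fintype A] (N K m : ℕ) (i j : vF X 0 N) :
    (TM X (v1 X 0 N) (v1 X N K) * TM X (v1 X N K) (v1 X N K) ^ m * TM X (v1 X N K) (v1 X 0 N)) i j
    = lk X (· ∈ vF X N K) m i j := by
  have hr : (fun b => b ∈ Set.range (v1 X N K)) = (· ∈ vF X N K) := by
    funext b
    simp [v1]
  have h1 := TM_pow_mul X (v1 X N K) Subtype.val_injective (TM X (v1 X N K) (v1 X 0 N))
      (fun (j : vF X 0 N) e => ∑ c, if red X (e ++ [c]) = (j : List A) then 1 else 0)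
      (fun k j => rfl) m
  rw [Matrix.mul_assoc, TM_mul X (v1 X 0 N) (v1 X N K) Subtype.val_injective _ _ h1, pc_succ, hr]
  rfl

end Graph

section Low
open Classical Topology

variable {A : Type*} {X : Set (ℤ → A)} [TopologicalSpace A] (hX : IsSubshift X)
include hX

lemma st_eq (w : List A) : ∀ {a : List A}, IsRed X a → st X a w = red X (a ++ w) := by
  induction w with
  | nil => intro a ha; simp [st, red_self hX ha]
  | cons c w ih =>
    intro a ha
    rw [st, ih (red_isRed X (by simp)), red_append hX (by simp)]
    simp

lemma ok_iff {R : List A → Prop} (w : List A) : ∀ {a : List A}, IsRed X a →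
    (ok X R a w ↔ ∀ u v, u ≠ [] → w = u ++ v → R (red X (a ++ u))) := by
  induction w with
  | nil =>
    intro a ha
    simp only [ok, true_iff]
    intro u v hu h; simp at h; exact absurd h.1 hu
  | cons c w ih =>
    intro a ha
    rw [ok, ih (red_isRed X (by simp))]
    constructor
    · rintro ⟨h1, h2⟩ u v hu h
      rcases u with _ | ⟨d, u⟩
      · exact absurd rfl hu
      · simp at h
        obtain ⟨rfl, h⟩ := h
        by_cases hu' : u = []
        · subst hu'; exact h1
        · have := h2 u v hu' h
          rw [red_append hX (by simp)] at this
          simpa using this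
    · intro h
      refine ⟨h [c] w (by simp) rfl, ?_⟩
      intro u v hu he
      rw [red_append hX (by simp)]
      have := h (c :: u) v (by simp) (by simp [he])
      simpa using this

lemma red_vx {w : List A} (hw : w ≠ []) (h : (fol X w).Nonempty) : IsVx X (red X w) :=
  ⟨red_isRed X hw, by rw [fol_red]; exact h⟩

/-- loops -/
lemma loop_red {x : ℤ → A} {n : ℕ} (hx : Function.Periodic x (n : ℤ)) {a : List A}
    (ha : IsRed X a) (hl : red X (a ++ wd x 0 n) = a) (m : ℕ) :
    ∀ j : ℤ, red X (a ++ wd x (j * n) (m * n)) = a := by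
  induction m with
  | zero => intro j; simp [wd, red_self hX ha]
  | succ m ih =>
    intro j
    have e : wd x (j * n) n = wd x 0 n := by simpa using wd_per hx 0 j n
    rw [Nat.succ_mul, wd_add, ← List.append_assoc, ← red_append hX (by simp [ha.1]), e]
    have := ih (j - 1)
    rw [show (j - 1) * (n : ℤ) = j * n - n by ring] at this
    rw [this, hl]

lemma loop_fol {x : ℤ → A} {n : ℕ} (hx : Function.Periodic x (n : ℤ)) {a : List A}
    (ha : IsRed X a) (hl : red X (a ++ wd x 0 n) = a) {m : ℕ} (hm : a.length ≤ m * n) (j : ℤ) :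
    a <:+ wd x (j * n) (m * n) ∧ fol X (wd x (j * n) (m * n)) = fol X a := by
  have h1 := loop_red hX hx ha hl m j
  have h2 : a <:+ a ++ wd x (j * n) (m * n) := by
    conv_lhs => rw [← h1]
    exact red_suffix X _
  have h3 : a <:+ wd x (j * n) (m * n) :=
    List.suffix_of_suffix_length_le h2 (List.suffix_append _ _) (by simpa using hm)
  refine ⟨h3, (fol_suffix hX h3).antisymm ?_⟩
  have : fol X a = fol X (a ++ wd x (j * n) (m * n)) := by rw [← fol_red X (a ++ _), h1]
  rw [this]
  exact fol_suffix hX (List.suffix_append _ _)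

lemma loop_mem [DiscreteTopology A] {x : ℤ → A} {n : ℕ} (hn : 0 < n)
    (hx : Function.Periodic x (n : ℤ)) {a : List A}
    (ha : IsVx X a) (hl : red X (a ++ wd x 0 n) = a) : x ∈ X := by
  apply mem_of_fol hX
  intro k
  have hn' : (1 : ℤ) ≤ n := by exact_mod_cast hn
  refine ⟨(k : ℤ) * n, (2 * k + 1 + a.length) * n, ?_, ?_, ?_⟩
  · nlinarith
  · push_cast; nlinarith
  · rw [(loop_fol hX hx ha.1 hl (by nlinarith) _).2]
    exact ha.2

lemma loop_unique {x : ℤ → A} {n : ℕ} (hn : 0 < n)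
    (hx : Function.Periodic x (n : ℤ)) {a b : List A}
    (ha : IsRed X a) (hl : red X (a ++ wd x 0 n) = a)
    (hb : IsRed X b) (hl' : red X (b ++ wd x 0 n) = b) : a = b := by
  have h1 := loop_fol hX hx ha hl (m := a.length + b.length) (by nlinarith) 0
  have h2 := loop_fol hX hx hb hl' (m := a.length + b.length) (by nlinarith) 0
  exact (red_unique hX ha h1.1 h1.2).symm.trans (red_unique hX hb h2.1 h2.2)

lemma loop_low {x : ℤ → A} {n N : ℕ} (hn : 0 < n)
    (hx : Function.Periodic x (n : ℤ)) {a u v : List A}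
    (ha : IsRed X a) (hl : red X (a ++ wd x 0 n) = a) (huv : wd x 0 n = u ++ v)
    (hs : (red X (a ++ u)).length ≤ N) : ¬ Hi X N x := by
  intro hi
  have hlen : u.length + v.length = n := by
    have := congrArg List.length huv; simpa using this.symm
  obtain ⟨l, hl1, hl2⟩ := hi (-(v.length : ℤ))
  have h1 := loop_fol hX hx ha hl (m := a.length + l) (by nlinarith) (-1)
  have hu : wd x (-(v.length : ℤ)) u.length = u := by
    have e : wd x 0 (u.length + v.length) = u ++ v := by rw [hlen]; exact huv
    rw [wd_add] at e
    have := (List.append_inj e (by simp)).1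
    simpa using this
  have hW : wd x (-1 * (n : ℤ)) ((a.length + l) * n) ++ u =
      wd x (-(v.length : ℤ)) ((a.length + l) * n + u.length) := by
    rw [wd_add, hu]
    congr 2
    rw [← hlen]; push_cast; ring
  set m := (a.length + l) * n + u.length with hm
  have hlm : l ≤ m := by nlinarith
  have hsub : red X (a ++ u) <:+ wd x (-(v.length : ℤ)) m := by
    rw [← hW]
    refine (red_suffix X _).trans ?_
    obtain ⟨t, ht⟩ := h1.1
    exact ⟨t, by rw [← ht, List.append_assoc]⟩
  have ht := suffix_wd_eq hsub
  have hf : fol X (wd x (-(v.length : ℤ)) m) = fol X (red X (a ++ u)) := by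
    rw [← hW, fol_red]
    exact fol_append_congr X h1.2 u
  obtain ⟨l', rfl⟩ : ∃ l', l = l' + 1 := ⟨l - 1, by omega⟩
  have c1 : fol X (wd x (-(v.length : ℤ)) m) ⊆ fol X (wd x (-(v.length : ℤ)) (l' + 1)) :=
    fol_suffix hX (wd_suffix x _ hlm)
  have c2 : fol X (wd x (-(v.length : ℤ)) l') ⊆ fol X (red X (a ++ u)) := by
    rw [ht]
    exact fol_suffix hX (wd_suffix x _ (by omega))
  have c3 := hl2.2.2
  simp only [wd, List.tail_cons] at c3
  apply c3.2
  exact (c2.trans hf.symm.subset).trans c1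

/-- existence of the loop -/
lemma loop_exists {x : ℤ → A} {n N : ℕ} (hn : 0 < n) (hN : 1 ≤ N) (hxX : x ∈ X)
    (hx : Function.Periodic x (n : ℤ)) (hlow : ¬ Hi X N x) :
    ∃ a u v, IsVx X a ∧ a.length ≤ N + n ∧ red X (a ++ wd x 0 n) = a ∧ wd x 0 n = u ++ v ∧ u ≠ [] ∧
      (red X (a ++ u)).length ≤ N := by
  have hn' : (0 : ℤ) < n := by exact_mod_cast hn
  simp only [Hi, not_forall, not_exists, not_and] at hlow
  obtain ⟨i, hi⟩ := hlow
  obtain ⟨d, hdn, hd⟩ : ∃ d : ℕ, d < n ∧ ∀ m, wd x (-(d : ℤ)) m = wd x i m := by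
    have h0 := Int.emod_nonneg (-i) hn'.ne'
    have h1 := Int.emod_lt_of_pos (-i) hn'
    have h2 := Int.emod_add_mul_ediv (-i) n
    refine ⟨((-i) % n).toNat, by omega, fun m => ?_⟩
    rw [← wd_per hx i ((-i) / n) m]
    congr 1
    rw [Int.toNat_of_nonneg h0]; linarith
  have hstab : ∀ k, fol X (wd x (-(d : ℤ)) (N + k)) = fol X (wd x (-(d : ℤ)) N) := by
    intro k
    induction k with
    | zero => rfl
    | succ k ih =>
      rw [← ih]
      have h1 := hi (N + k + 1) (by omega)
      rw [← hd] at h1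
      by_contra hne
      apply h1
      refine ⟨by simp [wd], (fol_wd_nonempty hX hxX _ _).ne_empty, ?_⟩
      simp only [wd, List.tail_cons]
      exact (fol_cons_subset hX _ _).ssubset_of_ne hne
  have hNn : wd x (-(d : ℤ)) N ≠ [] := by
    intro h; have := congrArg List.length h; simp at this; omega
  have hred : ∀ k, red X (wd x (-(d : ℤ)) (N + k)) = red X (wd x (-(d : ℤ)) N) := by
    intro k
    apply red_unique hX (red_isRed X hNn)
    · exact (red_suffix X _).trans (wd_suffix x _ (by omega))
    · rw [fol_red, hstab]
  have hwne : ∀ (i : ℤ) k, wd x i (N + k) ≠ [] := by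
    intro i k h; have := congrArg List.length h; simp at this; omega
  have hW : ∀ k, red X (wd x 0 (N + k + d)) = red X (wd x 0 (N + d)) := by
    intro k
    rw [wd_add x 0 (N + k) d, wd_add x 0 N d, zero_sub, ← red_append hX (hwne _ k), ← red_append hX hNn, hred]
  have hsh : ∀ m, wd x (-(n : ℤ)) m = wd x 0 m := by
    intro m; simpa using wd_per hx 0 (-1) m
  refine ⟨red X (wd x 0 (N + d)), wd x (-(d : ℤ)) (n - d), wd x 0 d, ?_, ?_, ?_, ?_, ?_, ?_⟩
  · exact red_vx hX (hwne _ d) (fol_wd_nonempty hX hxX _ _)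
  · have := (red_suffix X (wd x 0 (N + d))).length_le
    simp at this; omega
  · have e : wd x 0 (N + d + n) = wd x 0 (N + d) ++ wd x 0 n := by
      rw [wd_add, zero_sub, hsh]
    rw [red_append hX (hwne _ d), ← e, show N + d + n = N + n + d by ring, hW]
  · have := wd_add x 0 (n - d) d
    rw [Nat.sub_add_cancel hdn.le] at this
    simpa using this
  · intro h; have := congrArg List.length h; simp at this; omega
  · rw [red_append hX (hwne _ d), ← hsh]
    have : wd x (-(d : ℤ)) (N + d + (n - d)) = wd x (-(n : ℤ)) (N + d) ++ wd x (-(d : ℤ)) (n - d) := by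
      rw [wd_add]
      congr 2
      omega
    rw [← this, show N + d + (n - d) = N + n by omega, hred]
    have := (red_suffix X (wd x (-(d : ℤ)) N)).length_le
    simpa using this

variable [Fintype A]

lemma lowF_le [DiscreteTopology A] {N K n : ℕ} (hn : 0 < n) (w : List A) (hw : w.length = n) :
    (lowF X N K w).card ≤ if w ∈ perW X (fun x => ¬ Hi X N x) n then 1 else 0 := by
  obtain ⟨x, hx, rfl⟩ := exists_per hn hw
  rcases Finset.eq_empty_or_nonempty (lowF X N K (wd x 0 n)) with h | ⟨a, ha⟩
  · rw [h]; simp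
  have key : ∀ a ∈ lowF X N K (wd x 0 n), IsVx X a ∧ red X (a ++ wd x 0 n) = a := by
    intro a ha
    simp only [lowF, Finset.mem_filter, mem_vF] at ha
    refine ⟨ha.1.1, ?_⟩
    rw [← st_eq hX _ ha.1.1.1]; exact ha.2.1
  rw [if_pos]
  · rw [Finset.card_le_one]
    intro a ha b hb
    obtain ⟨h1, h2⟩ := key a ha
    obtain ⟨h3, h4⟩ := key b hb
    exact loop_unique hX hn hx h1.1 h2 h3.1 h4
  · obtain ⟨h1, h2⟩ := key a ha
    simp only [perW, mem_pF]
    refine ⟨hw, x, loop_mem hX hn hx h1 h2, hx, ?_, rfl⟩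
    simp only [lowF, Finset.mem_filter] at ha
    obtain ⟨-, -, h3, h4⟩ := ha
    rw [ok_iff hX _ h1.1] at h3 h4
    push Not at h4
    obtain ⟨u, v, hu, huv, h5⟩ := h4
    have h6 := h3 u v hu huv
    apply loop_low hX hn hx h1.1 h2 huv
    rw [mem_vF] at h5 h6
    by_contra hc
    exact h5 ⟨h6.1, by omega, h6.2.2⟩

lemma lowF_eq [DiscreteTopology A] {N K n : ℕ} (hn : 0 < n) (hN : 1 ≤ N) (hK : N + 2 * n ≤ K)
    (w : List A) (hw : w.length = n) :
    (lowF X N K w).card = if w ∈ perW X (fun x => ¬ Hi X N x) n then 1 else 0 := by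
  apply le_antisymm (lowF_le hX hn w hw)
  split_ifs with h
  · rw [Nat.succ_le_iff, Finset.card_pos]
    simp only [perW, mem_pF] at h
    obtain ⟨-, x, hxX, hx, hlow, rfl⟩ := h
    obtain ⟨a, u, v, h1, h2, h3, h4, h5, h6⟩ := loop_exists hX hn hN hxX hx hlow
    refine ⟨a, ?_⟩
    have hpos := List.length_pos_iff.2 h1.1.1
    simp only [lowF, Finset.mem_filter, mem_vF]
    refine ⟨⟨h1, hpos, by omega⟩, ?_, ?_, ?_⟩
    · rw [st_eq hX _ h1.1, h3]
    · rw [ok_iff hX _ h1.1]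
      intro u v hu huv
      have hne : a ++ u ≠ [] := by simp [hu]
      refine ⟨red_vx hX hne ?_, List.length_pos_iff.2 (red_ne_nil X hne), ?_⟩
      · apply fol_append_nonempty X v
        rw [List.append_assoc, ← huv, ← fol_red, h3]
        exact h1.2
      · have e1 := (red_suffix X (a ++ u)).length_le
        have e2 := congrArg List.length huv
        simp at e1 e2; omega
    · rw [ok_iff hX _ h1.1]
      intro hall
      have := hall u v h5 h4
      omega
  · exact Nat.zero_le _

lemma low_sum_le [DiscreteTopology A] {N K n : ℕ} (hn : 0 < n) :
    ∑ w ∈ words A n, (lowF X N K w).card ≤ Fintype.card A ^ n := by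
  rw [← words_card, Finset.card_eq_sum_ones]
  apply Finset.sum_le_sum
  intro w hw
  refine (lowF_le hX hn w (mem_words.1 hw)).trans ?_
  split_ifs <;> simp

lemma low_sum_eq [DiscreteTopology A] {N K n : ℕ} (hn : 0 < n) (hN : 1 ≤ N) (hK : N + 2 * n ≤ K) :
    ∑ w ∈ words A n, (lowF X N K w).card = (perW X (fun x => ¬ Hi X N x) n).card := by
  rw [Finset.sum_congr rfl fun w hw => lowF_eq hX hn hN hK w (mem_words.1 hw)]
  rw [← Finset.card_filter]
  congr 1
  ext w
  simp only [Finset.mem_filter, mem_words, perW, mem_pF]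
  tauto

end Low

section Final
open Classical Topology

variable {A : Type*} [Fintype A]

section nohX
variable (X : Set (ℤ → A))

def Rinf (N : ℕ) (b : List A) : Prop := IsVx X b ∧ N < b.length

lemma lk_norm_le (R : List A → Prop) (m : ℕ) (a b : List A) :
    ‖lk X R m a b‖ ≤ Fintype.card A * (pF (ok X R a) (m + 1)).card := by
  rw [lk, pc_eq, pF, Finset.card_filter]
  refine (norm_sum_le _ _).trans ?_
  push_cast
  rw [Finset.mul_sum]
  apply Finset.sum_le_sum
  intro w _
  split_ifs
  · rw [mul_one]
    refine (norm_sum_le _ _).trans ?_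
    refine (Finset.sum_le_card_nsmul _ _ 1 ?_).trans (by simp)
    intro c _; split_ifs <;> simp
  · simp

lemma lk_norm_le_pow (R : List A → Prop) (m : ℕ) (a b : List A) :
    ‖lk X R m a b‖ ≤ (Fintype.card A : ℝ) ^ (m + 2) := by
  refine (lk_norm_le X R m a b).trans ?_
  have := pF_le (ok X R a) (m + 1)
  calc (Fintype.card A : ℝ) * (pF (ok X R a) (m + 1)).card
      ≤ Fintype.card A * (Fintype.card A : ℝ) ^ (m + 1) := by gcongr; exact_mod_cast this
    _ = _ := by ring

lemma TM_row {ι κ : Type*} [Fintype κ] (v : ι → List A) (v' : κ → List A)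
    (hv : Function.Injective v') (i : ι) :
    ∑ j, ‖TM X v v' i j‖ ≤ Fintype.card A := by
  calc ∑ j, ‖TM X v v' i j‖ ≤ ∑ j, ∑ c : A, if red X (v i ++ [c]) = v' j then (1 : ℝ) else 0 := by
        apply Finset.sum_le_sum
        intro j _
        rw [TM, Matrix.of_apply]
        refine (norm_sum_le _ _).trans (le_of_eq ?_)
        refine Finset.sum_congr rfl fun c _ => ?_
        split_ifs <;> simp
    _ = ∑ c : A, ∑ j, if red X (v i ++ [c]) = v' j then (1 : ℝ) else 0 := Finset.sum_comm
    _ ≤ ∑ c : A, 1 := by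
        apply Finset.sum_le_sum
        intro c _
        rw [← Finset.sum_filter, Finset.sum_const, nsmul_eq_mul, mul_one]
        norm_cast
        rw [Finset.card_le_one]
        intro j hj j' hj'
        simp only [Finset.mem_filter] at hj hj'
        exact hv (hj.2.symm.trans hj'.2)
    _ = _ := by simp

end nohX

variable {X : Set (ℤ → A)} [TopologicalSpace A] (hX : IsSubshift X)
include hX

lemma lk_stable {N K m : ℕ} (hK : N + m + 1 ≤ K) {a : List A} (ha : a ∈ vF X 0 N) (b : List A) :
    lk X (· ∈ vF X N K) m a b = lk X (Rinf X N) m a b := by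
  rw [mem_vF] at ha
  rw [lk, lk, pc_eq, pc_eq]
  refine Finset.sum_congr rfl fun w hw => ?_
  rw [mem_words] at hw
  have : ok X (· ∈ vF X N K) a w ↔ ok X (Rinf X N) a w := by
    rw [ok_iff hX _ ha.1.1, ok_iff hX _ ha.1.1]
    refine forall_congr' fun u => forall_congr' fun v => forall_congr' fun hu =>
      forall_congr' fun huv => ?_
    rw [mem_vF, Rinf]
    have e1 := (red_suffix X (a ++ u)).length_le
    have e2 := congrArg List.length huv
    simp at e1 e2
    constructor
    · rintro ⟨h1, h2, -⟩; exact ⟨h1, h2⟩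
    · rintro ⟨h1, h2⟩; exact ⟨h1, h2, by omega⟩
  simp only [this]

omit [Fintype A] in
lemma ok_Q0 {N : ℕ} (hN : 1 ≤ N) {a : List A} (ha : IsRed X a) (n : ℕ) :
    ∀ w : List A, w.length = n → ok X (Rinf X N) a w →
      ∃ s, s <:+ a ∧ IsQ0 (IsLeftConstraint X) N (s ++ w) := by
  induction n using Nat.strong_induction_on with
  | _ n ih =>
    intro w hw hok
    by_cases hw0 : w = []
    · subst hw0; exact ⟨[], List.nil_suffix, .nil⟩
    have hend := ok_end X w a hw0 hok
    rw [st_eq hX _ ha] at hend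
    have hlc : IsLeftConstraint X (red X (a ++ w)) :=
      lc_of_red hX hend.1.1 (by have := hend.2; omega) hend.1.2
    have hsuf := red_suffix X (a ++ w)
    by_cases hle : (red X (a ++ w)).length ≤ w.length
    · obtain ⟨w', hw'⟩ := List.suffix_of_suffix_length_le hsuf (List.suffix_append a w) hle
      have hlen := congrArg List.length hw'
      simp at hlen
      have hlt : w'.length < n := by have := hend.2; omega
      have hok' : ok X (Rinf X N) a w' := by
        rw [ok_iff hX _ ha] at hok ⊢
        intro u v hu huv
        exact hok u (v ++ red X (a ++ w)) hu (by rw [← List.append_assoc, ← huv, hw'])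
      obtain ⟨s, hs, hq⟩ := ih _ hlt w' rfl hok'
      refine ⟨s, hs, ?_⟩
      rw [← hw', ← List.append_assoc]
      exact hq.append hlc hend.2
    · obtain ⟨s, hs⟩ := List.suffix_of_suffix_length_le (List.suffix_append a w) hsuf (by omega)
      refine ⟨s, ?_, ?_⟩
      · rw [← hs] at hsuf
        obtain ⟨t, ht⟩ := hsuf
        rw [← List.append_assoc] at ht
        exact ⟨t, List.append_cancel_right ht⟩
      · rw [hs]
        have := IsQ0.cons _ [] hlc hend.2 (.nil)
        simpa using this

lemma ok_count {N : ℕ} (hN : 1 ≤ N) {a : List A} (ha : a ∈ vF X 0 N) (k : ℕ) :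
    (pF (ok X (Rinf X N) a) k).card ≤
      ∑ p ∈ Finset.range (N + 1), (pF (IsQ (IsLeftConstraint X) N) (p + k)).card := by
  rw [mem_vF] at ha
  have hsub : pF (ok X (Rinf X N) a) k ⊆ (Finset.range (N + 1)).biUnion fun p =>
      (pF (IsQ (IsLeftConstraint X) N) (p + k)).image (List.drop p) := by
    intro w hw
    rw [mem_pF] at hw
    obtain ⟨s, hs, hq⟩ := ok_Q0 hX hN ha.1.1 k w hw.1 hw.2
    simp only [Finset.mem_biUnion, Finset.mem_range, Finset.mem_image, mem_pF]
    refine ⟨s.length, ?_, s ++ w, ⟨by simp [hw.1], hq.isQ⟩, by simp⟩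
    have := hs.length_le; omega
  refine (Finset.card_le_card hsub).trans (Finset.card_biUnion_le.trans ?_)
  exact Finset.sum_le_sum fun p _ => Finset.card_image_le

noncomputable def Lmat (X : Set (ℤ → A)) (N : ℕ) (z : ℂ) : Matrix (vF X 0 N) (vF X 0 N) ℂ :=
  Matrix.of fun i j => z * TM X (v1 X 0 N) (v1 X 0 N) i j + ∑' m, lk X (Rinf X N) m i j * z ^ (m + 2)

lemma low_tendsto [DiscreteTopology A] {N : ℕ} (hN : 1 ≤ N) {z : ℂ}
    (hz : ‖z‖ * (Fintype.card A + 1) < 1) :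
    Tendsto (fun K => ∑' n : ℕ,
      ((∑ w ∈ words A (n + 1), (lowF X N K w).card : ℕ) : ℂ) / (n + 1) * z ^ (n + 1)) atTop
      (𝓝 (∑' n : ℕ, ((perW X (fun x => ¬ Hi X N x) (n + 1)).card : ℂ) / (n + 1) * z ^ (n + 1))) := by
  obtain ⟨d, hd⟩ : ∃ d : ℝ, d = (Fintype.card A : ℝ) := ⟨_, rfl⟩
  rw [← hd] at hz
  have hd0 : 0 ≤ d := by rw [hd]; positivity
  have hzd : d * ‖z‖ < 1 := by nlinarith [norm_nonneg z]
  have hzd0 : 0 ≤ d * ‖z‖ := mul_nonneg hd0 (norm_nonneg z)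
  have hgeo : Summable fun n : ℕ => (d * ‖z‖) ^ n := summable_geometric_of_lt_one hzd0 hzd
  apply tendsto_tsum_of_dominated_convergence (bound := fun n => (d * ‖z‖) ^ (n + 1))
  · exact (summable_nat_add_iff 1).2 hgeo
  · intro n
    apply tendsto_const_nhds.congr'
    filter_upwards [eventually_ge_atTop (N + 2 * (n + 1))] with K hK
    rw [low_sum_eq hX (Nat.succ_pos n) hN hK]
  · refine Eventually.of_forall fun K n => ?_
    have h0 := low_sum_le hX (N := N) (K := K) (Nat.succ_pos n)
    generalize (∑ w ∈ words A (n + 1), (lowF X N K w).card) = e at h0 ⊢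
    have h1 : (e : ℝ) ≤ d ^ (n + 1) := by
      rw [hd]; exact_mod_cast h0
    have h2 : ‖(n : ℂ) + 1‖ = n + 1 := by
      have := Complex.norm_natCast (n + 1); push_cast at this; exact this
    rw [norm_mul, norm_pow, mul_pow, norm_div, h2, Complex.norm_natCast]
    refine mul_le_mul_of_nonneg_right ?_ (by positivity)
    refine (div_le_self (by positivity) ?_).trans h1
    linarith [(Nat.cast_nonneg n : (0:ℝ) ≤ n)]

lemma lk_tendsto {N : ℕ} {z : ℂ}
    (hz : ‖z‖ * (Fintype.card A + 1) < 1) :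
    Tendsto (fun K => (Matrix.of fun i j =>
      z * TM X (v1 X 0 N) (v1 X 0 N) i j + ∑' m, lk X (· ∈ vF X N K) m i j * z ^ (m + 2) :
        Matrix (vF X 0 N) (vF X 0 N) ℂ)) atTop (𝓝 (Lmat X N z)) := by
  obtain ⟨d, hd⟩ : ∃ d : ℝ, d = (Fintype.card A : ℝ) := ⟨_, rfl⟩
  rw [← hd] at hz
  have hd0 : 0 ≤ d := by rw [hd]; positivity
  have hzd : d * ‖z‖ < 1 := by nlinarith [norm_nonneg z]
  have hzd0 : 0 ≤ d * ‖z‖ := mul_nonneg hd0 (norm_nonneg z)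
  have hgeo : Summable fun n : ℕ => (d * ‖z‖) ^ n := summable_geometric_of_lt_one hzd0 hzd
  refine tendsto_pi_nhds.2 fun i => tendsto_pi_nhds.2 fun j => ?_
  simp only [Lmat, Matrix.of_apply]
  apply Tendsto.const_add
  apply tendsto_tsum_of_dominated_convergence (bound := fun n => (d * ‖z‖) ^ (n + 2))
  · exact (summable_nat_add_iff 2).2 hgeo
  · intro m
    apply tendsto_const_nhds.congr'
    filter_upwards [eventually_ge_atTop (N + m + 1)] with K hK
    rw [lk_stable hX hK i.2]
  · refine Eventually.of_forall fun K m => ?_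
    rw [norm_mul, norm_pow, mul_pow]
    refine mul_le_mul_of_nonneg_right ?_ (by positivity)
    rw [hd]
    exact lk_norm_le_pow X _ m _ _

omit hX [TopologicalSpace A] in
lemma schur_K {N K : ℕ} (hK : N ≤ K) {z : ℂ}
    (hz : ‖z‖ * (Fintype.card A + 1) < 1) :
    Complex.exp (∑' n : ℕ,
      ((∑ w ∈ words A (n + 1), (lowF X N K w).card : ℕ) : ℂ) / (n + 1) * z ^ (n + 1))
      * (1 - (Matrix.of fun i j =>
      z * TM X (v1 X 0 N) (v1 X 0 N) i j + ∑' m, lk X (· ∈ vF X N K) m i j * z ^ (m + 2) :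
        Matrix (vF X 0 N) (vF X 0 N) ℂ)).det = 1 := by
  have := schur_zeta (TM X (v1 X 0 N) (v1 X 0 N)) (TM X (v1 X 0 N) (v1 X N K))
      (TM X (v1 X N K) (v1 X 0 N)) (TM X (v1 X N K) (v1 X N K)) (Fintype.card A + 1) (by positivity)
      (by
        intro i
        have := TM_row X (Sum.elim (v1 X 0 N) (v1 X N K)) _ (elim_inj X N K) i
        rw [← MM_eq] at this
        exact le_trans this (by linarith))
      (fun i => (TM_row X _ _ Subtype.val_injective i).trans (by linarith)) z hz
  simp only [BDC] at this
  refine Eq.trans ?_ this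
  congr 2
  congr 1
  funext n
  rw [← trace_diff X hK (Nat.succ_pos n)]
  rfl

lemma schur_limit [DiscreteTopology A] {N : ℕ} (hN : 1 ≤ N) {z : ℂ}
    (hz : ‖z‖ * (Fintype.card A + 1) < 1) :
    Complex.exp (∑' n : ℕ, ((perW X (fun x => ¬ Hi X N x) (n + 1)).card : ℂ) / (n + 1) * z ^ (n + 1))
      * (1 - Lmat X N z).det = 1 := by
  have hc : Continuous fun M : Matrix (vF X 0 N) (vF X 0 N) ℂ => (1 - M).det :=
    (continuous_const.sub continuous_id).matrix_det
  have hT3 := ((Complex.continuous_exp.tendsto _).comp (low_tendsto hX hN hz)).mul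
    ((hc.tendsto _).comp (lk_tendsto (N := N) hX hz))
  refine tendsto_nhds_unique hT3 (tendsto_const_nhds.congr' ?_)
  filter_upwards [eventually_ge_atTop N] with K hK
  exact (schur_K hK hz).symm

end Final

section Main
open Classical Topology

lemma inv_ball {ρ : ℝ} (hρ : 0 < ρ) {z : ℂ} (hz : z ∈ Metric.ball (0 : ℂ) (1 / ρ)) : ‖z‖ * ρ < 1 := by
  rw [mem_ball_zero_iff, lt_div_iff₀ hρ] at hz; exact hz

lemma main_local {A : Type*} [Fintype A] [Nonempty A] [TopologicalSpace A] [DiscreteTopology A]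
    {X : Set (ℤ → A)} (hX : IsSubshift X) {ρ : ℝ} (hρ : Real.exp (hC X) < ρ) :
    ∃ g : ℂ → ℂ, MeromorphicOn g (Metric.ball 0 (1 / ρ)) ∧
      ∀ z : ℂ, ‖z‖ * (Fintype.card A + 1) < 1 → ‖z‖ * ρ < 1 →
      g z = Complex.exp (∑' n : ℕ, (perCount X (n + 1) : ℂ) / (n + 1) * z ^ (n + 1)) := by
  obtain ⟨h1, N, hN, C, hC, hQ⟩ := choose_N X hρ
  have hρ0 : 0 < ρ := by linarith
  have hnorm : ∀ n : ℕ, ‖(n : ℂ) + 1‖ = n + 1 := by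
    intro n
    have := Complex.norm_natCast (n + 1); push_cast at this; exact this
  -- the part with large constraints
  have hS : ∀ n : ℕ, ‖((perW X (Hi X N) (n + 1)).card : ℂ) / (n + 1)‖ ≤ (C * ρ) * ρ ^ n := by
    intro n
    rw [norm_div, hnorm, Complex.norm_natCast, div_le_iff₀ (by positivity)]
    have e1 : ((perW X (Hi X N) (n + 1)).card : ℝ) ≤
        ((n + 1 : ℕ) : ℝ) * ((pF (IsQ (IsLeftConstraint X) N) (n + 1)).card : ℝ) := by
      exact_mod_cast hi_count hX (Nat.succ_pos n)
    have e2 := hQ (n + 1)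
    calc _ ≤ _ := e1
      _ ≤ ((n + 1 : ℕ) : ℝ) * (C * ρ ^ (n + 1)) := by gcongr
      _ = _ := by push_cast; ring
  have hP : ∀ n : ℕ, ‖((perW X (fun x => ¬ Hi X N x) (n + 1)).card : ℂ) / (n + 1)‖ ≤
      (Fintype.card A : ℝ) * (Fintype.card A : ℝ) ^ n := by
    intro n
    rw [norm_div, hnorm, Complex.norm_natCast]
    have e1 : ((perW X (fun x => ¬ Hi X N x) (n + 1)).card : ℝ) ≤ (Fintype.card A : ℝ) ^ (n + 1) := by
      exact_mod_cast perW_le X _ (n + 1)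
    refine (div_le_self (by positivity) (by linarith [(Nat.cast_nonneg n : (0:ℝ) ≤ n)])).trans ?_
    rw [← pow_succ']; exact e1
  have hcard : (0 : ℝ) < Fintype.card A := by exact_mod_cast Fintype.card_pos
  -- bound for the operator
  obtain ⟨C', hL⟩ : ∃ C' : ℝ, ∀ (i j : vF X 0 N) (m : ℕ),
      ‖lk X (Rinf X N) m i j‖ ≤ C' * ρ ^ m := by
    refine ⟨Fintype.card A * ∑ p ∈ Finset.range (N + 1), C * ρ ^ (p + 1), fun i j m => ?_⟩
    refine (lk_norm_le X _ m _ _).trans ?_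
    rw [mul_assoc, Finset.sum_mul]
    gcongr
    have := ok_count hX hN i.2 (m + 1)
    have e : ((pF (ok X (Rinf X N) i) (m + 1)).card : ℝ) ≤
      ∑ p ∈ Finset.range (N + 1), ((pF (IsQ (IsLeftConstraint X) N) (p + (m + 1))).card : ℝ) := by
      exact_mod_cast this
    refine e.trans (Finset.sum_le_sum fun p _ => (hQ _).trans (le_of_eq ?_))
    ring
  have hdet : DifferentiableOn ℂ (fun z => (1 - Lmat X N z).det) (Metric.ball 0 (1 / ρ)) := by
    simp only [Matrix.det_apply]
    apply DifferentiableOn.fun_sum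
    intro s _
    apply DifferentiableOn.const_smul
    apply DifferentiableOn.fun_finsetProd
    intro i _
    simp only [Matrix.sub_apply, Lmat, Matrix.of_apply]
    apply DifferentiableOn.const_sub
    apply DifferentiableOn.add
    · exact differentiableOn_id.mul_const _
    · exact powser_diff _ C' ρ 2 hρ0 (hL _ _)
  have hE : DifferentiableOn ℂ (fun z => Complex.exp (∑' n : ℕ,
      ((perW X (Hi X N) (n + 1)).card : ℂ) / (n + 1) * z ^ (n + 1))) (Metric.ball 0 (1 / ρ)) :=
    (powser_diff _ _ ρ 1 hρ0 hS).cexp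
  refine ⟨fun z => Complex.exp (∑' n : ℕ,
      ((perW X (Hi X N) (n + 1)).card : ℂ) / (n + 1) * z ^ (n + 1)) * ((1 - Lmat X N z).det)⁻¹,
    ?_, ?_⟩
  · exact (hE.analyticOnNhd Metric.isOpen_ball).meromorphicOn.mul
      (hdet.analyticOnNhd Metric.isOpen_ball).meromorphicOn.inv
  · intro z hz hz2
    have key := schur_limit hX hN hz
    have hz3 : ‖z‖ * (Fintype.card A : ℝ) < 1 := by nlinarith [norm_nonneg z]
    have s1 := powser_summable _ _ ρ 1 hρ0 hS z hz2
    have s2 := powser_summable _ _ _ 1 hcard hP z hz3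
    have hsum : ∑' n : ℕ, (perCount X (n + 1) : ℂ) / (n + 1) * z ^ (n + 1) =
        (∑' n : ℕ, ((perW X (Hi X N) (n + 1)).card : ℂ) / (n + 1) * z ^ (n + 1)) +
        ∑' n : ℕ, ((perW X (fun x => ¬ Hi X N x) (n + 1)).card : ℂ) / (n + 1) * z ^ (n + 1) := by
      rw [← s1.tsum_add s2]
      congr 1
      funext n
      rw [perCount_eq (Nat.succ_pos n), perW_split (Nat.succ_pos n) X (Hi X N)]
      push_cast
      ring
    rw [hsum, Complex.exp_add]
    congr 1
    exact congrArg _ (inv_eq_of_mul_eq_one_left key)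

lemma main_glue {A : Type*} [Fintype A] [Nonempty A] [TopologicalSpace A] [DiscreteTopology A]
    {X : Set (ℤ → A)} (hX : IsSubshift X) :
    ∃ g : ℂ → ℂ, MeromorphicNFOn g (Metric.ball 0 (Real.exp (-hC X))) ∧
      g =ᶠ[𝓝[≠] 0] fun z => Complex.exp
        (∑' n : ℕ, (perCount X (n + 1) : ℂ) / (n + 1) * z ^ (n + 1)) := by
  apply glue (Real.exp_pos _)
  intro r hr hrR
  have hρ : Real.exp (hC X) < 1 / r := by
    rw [Real.exp_neg] at hrR
    rw [one_div]
    exact (lt_inv_comm₀ hr (Real.exp_pos _)).1 hrR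
  obtain ⟨g, hg, hg2⟩ := main_local hX hρ
  rw [one_div_one_div] at hg
  refine ⟨g, hg, ?_⟩
  apply Filter.Eventually.filter_mono nhdsWithin_le_nhds
  have hc1 : Tendsto (fun z : ℂ => ‖z‖ * ((Fintype.card A : ℝ) + 1)) (𝓝 0) (𝓝 0) := by
    have : Continuous (fun z : ℂ => ‖z‖ * ((Fintype.card A : ℝ) + 1)) := by fun_prop
    simpa using this.tendsto 0
  have hc2 : Tendsto (fun z : ℂ => ‖z‖ * (1 / r)) (𝓝 0) (𝓝 0) := by
    have : Continuous (fun z : ℂ => ‖z‖ * (1 / r)) := by fun_prop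
    simpa using this.tendsto 0
  filter_upwards [hc1.eventually_lt_const zero_lt_one, hc2.eventually_lt_const zero_lt_one]
    with z h1 h2
  exact hg2 z h1 h2

lemma rev_subshift {A : Type*} [TopologicalSpace A] {X : Set (ℤ → A)} (hX : IsSubshift X) :
    IsSubshift (rev X) := by
  have hmem : ∀ x, x ∈ rev X ↔ (fun n => x (-n)) ∈ X := by
    intro x
    constructor
    · rintro ⟨y, hy, rfl⟩; simpa using hy
    · intro h; exact ⟨_, h, by simp⟩
  refine ⟨?_, ?_⟩
  · have : rev X = (fun x : ℤ → A => fun n => x (-n)) ⁻¹' X := by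
      ext x; exact hmem x
    rw [this]
    apply hX.1.preimage
    fun_prop
  · ext x
    constructor
    · rintro ⟨y, hy, rfl⟩
      rw [hmem] at hy ⊢
      have := shift_mem hX hy (-1)
      convert this using 2 with n
      simp only [shift]; congr 1; ring
    · intro hx
      refine ⟨fun n => x (n - 1), ?_, ?_⟩
      · rw [hmem] at hx ⊢
        have := shift_mem hX hx 1
        convert this using 2 with n
        congr 1; ring
      · funext n; simp [shift]

lemma rev_perCount {A : Type*} (X : Set (ℤ → A)) (n : ℕ) : perCount (rev X) n = perCount X n := by
  rw [perCount, perCount]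
  symm
  refine Nat.card_congr
    { toFun := fun x => ⟨fun k => x.1 (-k), ⟨x.1, x.2.1, rfl⟩, ?_⟩
      invFun := fun x => ⟨fun k => x.1 (-k), ?_, ?_⟩
      left_inv := fun x => by ext; simp
      right_inv := fun x => by ext; simp }
  · have := (shift_per _ _).1 x.2.2
    rw [shift_per]
    intro k
    have := this.neg (-k)
    simp only
    rw [← this]; ring_nf
  · obtain ⟨y, hy, h⟩ := x.2.1
    rw [← h]; simpa using hy
  · have := (shift_per _ _).1 x.2.2
    rw [shift_per]
    intro k
    have := this.neg (-k)
    simp only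
    rw [← this]; ring_nf

lemma perCount_le_lang {A : Type*} [Fintype A] [TopologicalSpace A] {X : Set (ℤ → A)}
    (hX : IsSubshift X) {n : ℕ} (hn : 0 < n) :
    perCount X n ≤ (pF (fun w => ∃ x ∈ X, OccursAt w x 0) n).card := by
  rw [perCount_eq hn]
  apply Finset.card_le_card
  intro w hw
  simp only [perW, mem_pF] at hw ⊢
  obtain ⟨h, x, hx, -, -, rfl⟩ := hw
  refine ⟨h, _, shift_mem hX hx (-n + 1), ?_⟩
  rintro ⟨j, hj⟩
  simp only [List.get_eq_getElem]
  rw [wd_getElem]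
  congr 1
  ring

lemma perCount_bound {A : Type*} [Fintype A] [Nonempty A] [TopologicalSpace A] {X : Set (ℤ → A)}
    (hX : IsSubshift X) {ρ : ℝ} (hρ : Real.exp (hTop X) < ρ) :
    ∃ C : ℝ, ∀ n : ℕ, ‖(perCount X (n + 1) : ℂ) / (n + 1)‖ ≤ C * ρ ^ n := by
  have hρ0 : 0 < ρ := (Real.exp_pos _).trans hρ
  have hK : 1 ≤ Fintype.card A := Fintype.card_pos
  have hg := growth1 (f := fun n => (pF (fun w => ∃ x ∈ X, OccursAt w x 0) n).card) hK (pF_le _) hρ0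
    (by
      have := (Real.lt_log_iff_exp_lt hρ0).2 hρ
      simpa only [hTop, lang_card] using this)
  obtain ⟨C, hC, hall⟩ := all_bound hρ0 hg
  refine ⟨C * ρ, fun n => ?_⟩
  have hnorm : ‖(n : ℂ) + 1‖ = n + 1 := by
    have := Complex.norm_natCast (n + 1); push_cast at this; exact this
  rw [norm_div, hnorm, Complex.norm_natCast]
  refine (div_le_self (by positivity) (by linarith [(Nat.cast_nonneg n : (0:ℝ) ≤ n)])).trans ?_
  have e : (perCount X (n + 1) : ℝ) ≤ (pF (fun w => ∃ x ∈ X, OccursAt w x 0) (n + 1)).card := by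
    exact_mod_cast perCount_le_lang hX (Nat.succ_pos n)
  refine (e.trans (hall (n + 1))).trans (le_of_eq (by ring))

lemma zeta_hol {A : Type*} [Fintype A] [Nonempty A] [TopologicalSpace A] {X : Set (ℤ → A)}
    (hX : IsSubshift X) :
    (∀ z ∈ Metric.ball (0 : ℂ) (Real.exp (-hTop X)),
      Summable fun n : ℕ =>
        (perCount X (n + 1) : ℂ) / (n + 1) * z ^ (n + 1)) ∧
    DifferentiableOn ℂ
      (fun z : ℂ => Complex.exp
        (∑' n : ℕ, (perCount X (n + 1) : ℂ) / (n + 1) * z ^ (n + 1)))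
      (Metric.ball (0 : ℂ) (Real.exp (-hTop X))) := by
  have key : ∀ z ∈ Metric.ball (0 : ℂ) (Real.exp (-hTop X)), ∃ ρ, Real.exp (hTop X) < ρ ∧
      z ∈ Metric.ball (0 : ℂ) (1 / ρ) := by
    intro z hz
    rw [mem_ball_zero_iff] at hz
    obtain ⟨r, hr1, hr2⟩ := exists_between hz
    have hr0 : 0 < r := (norm_nonneg z).trans_lt hr1
    refine ⟨1 / r, ?_, ?_⟩
    · rw [Real.exp_neg] at hr2
      rw [one_div]
      exact (lt_inv_comm₀ hr0 (Real.exp_pos _)).1 hr2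
    · rw [one_div_one_div, mem_ball_zero_iff]; exact hr1
  constructor
  · intro z hz
    obtain ⟨ρ, h1, h2⟩ := key z hz
    obtain ⟨C, hC⟩ := perCount_bound hX h1
    have hρ0 : 0 < ρ := (Real.exp_pos _).trans h1
    exact powser_summable _ C ρ 1 hρ0 hC z (inv_ball hρ0 h2)
  · intro z hz
    obtain ⟨ρ, h1, h2⟩ := key z hz
    obtain ⟨C, hC⟩ := perCount_bound hX h1
    have hρ0 : 0 < ρ := (Real.exp_pos _).trans h1
    have := (powser_diff _ C ρ 1 hρ0 hC).cexp
    exact (this.differentiableAt (Metric.isOpen_ball.mem_nhds h2)).differentiableWithinAt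

lemma zeta_ext {A : Type*} [Fintype A] [Nonempty A] [TopologicalSpace A] [DiscreteTopology A]
    {X : Set (ℤ → A)} (hX : IsSubshift X) :
    ∃ g : ℂ → ℂ, MeromorphicNFOn g (Metric.ball 0 (Real.exp (-hSC X))) ∧
      g =ᶠ[𝓝[≠] 0] fun z => Complex.exp
        (∑' n : ℕ, (perCount X (n + 1) : ℂ) / (n + 1) * z ^ (n + 1)) := by
  rcases min_choice (hC X) (hC (rev X)) with h | h
  · rw [hSC, h]; exact main_glue hX
  · rw [hSC, h]
    have := main_glue (rev_subshift hX)
    simpa only [rev_perCount] using this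

end Main

/-- For a subshift of quasi-finite type, the Artin–Mazur zeta
function `ζ(z) = exp (∑_{n≥1} (zⁿ/n) #Fix(σⁿ))` is holomorphic on
`|z| < exp (−h_top X)` and extends to a meromorphic function on
`|z| < exp (−h_𝒮𝒞 X)`. -/
theorem qft_zeta_meromorphic
    {A : Type*} [Fintype A] [TopologicalSpace A] [DiscreteTopology A]
    (X : Set (ℤ → A)) (h : IsQFT X) :
    (∀ z ∈ Metric.ball (0 : ℂ) (Real.exp (-hTop X)),
      Summable fun n : ℕ =>
        (perCount X (n + 1) : ℂ) / (n + 1) * z ^ (n + 1)) ∧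
    DifferentiableOn ℂ
      (fun z : ℂ => Complex.exp
        (∑' n : ℕ, (perCount X (n + 1) : ℂ) / (n + 1) * z ^ (n + 1)))
      (Metric.ball (0 : ℂ) (Real.exp (-hTop X))) ∧
    ∃ g : ℂ → ℂ,
      MeromorphicOn g (Metric.ball (0 : ℂ) (Real.exp (-hSC X))) ∧
      Set.EqOn g
        (fun z : ℂ => Complex.exp
          (∑' n : ℕ, (perCount X (n + 1) : ℂ) / (n + 1) * z ^ (n + 1)))
        (Metric.ball (0 : ℂ) (Real.exp (-hTop X))) := by
  obtain ⟨hX, hlt⟩ := h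
  rcases isEmpty_or_nonempty A with hA | hA
  · have hp : ∀ n, perCount X n = 0 := by
      intro n
      rw [perCount]
      have : IsEmpty (ℤ → A) := ⟨fun f => hA.elim (f 0)⟩
      exact Nat.card_of_isEmpty
    simp only [hp, Nat.cast_zero, zero_div, zero_mul, tsum_zero, Complex.exp_zero]
    exact ⟨fun z _ => summable_zero, differentiableOn_const _, fun _ => 1,
      MeromorphicOn.const 1, fun _ _ => rfl⟩
  · obtain ⟨h1, h2⟩ := zeta_hol hX
    obtain ⟨g, hg, hg2⟩ := zeta_ext hX
    refine ⟨h1, h2, g, hg.meromorphicOn, ?_⟩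
    have hsub : Metric.ball (0 : ℂ) (Real.exp (-hTop X)) ⊆ Metric.ball 0 (Real.exp (-hSC X)) :=
      Metric.ball_subset_ball (Real.exp_le_exp.2 (by linarith))
    exact nf_eqOn (Real.exp_pos _) (fun z hz => hg (hsub hz))
      ((h2.analyticOnNhd Metric.isOpen_ball).meromorphicNFOn) hg2

end QFTPaper
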